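/- arXiv:2207.06575 — 2 statements merged into one kernel-verified Lean document; each statement's English description precedes it below -/
import Mathlib

section
/- Let F be a finite extension of ℚ₂ of degree m that does not contain a primitive fourth root of unity. Then the number |Ab(4)| of abelian extensions of F of degree 4 (inside a fixed algebraic closure of F) equals (20·2^{2m} − 12·2^m + 1)/3, i.e. 20·2^{2m}/3 − 4·2^m + 1/3. -/
theorem A_core {O : Type*} [CommRing O] [IsDomain O] [IsLocalRing O] (q : ℕ)
    (hq : Nat.card (O ⧸ Ideal.span {(2:O)}) = q) (hq0 : q ≠ 0)
    (h2 : (2:O) ≠ 0) (h2m : (2:O) ∈ IsLocalRing.maximalIdeal O)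
    (hens : ∀ y : O, ∃ x : O, (1 + 8 * x)^2 = 1 + 16 * y) :
    (powMonoidHom 2 : Oˣ →* Oˣ).range.index = 2 * q := by
  classical
  set f : Oˣ →* Oˣ := powMonoidHom 2
  let B : ℕ → Subgroup Oˣ := fun k =>
    (Units.map ((Ideal.Quotient.mk (Ideal.span {(2:O)^k})).toMonoidHom)).ker
  have memB : ∀ k (u : Oˣ), u ∈ B k ↔ ∃ a : O, (u : O) = 1 + 2^k * a := by
    intro k u
    simp only [B, MonoidHom.mem_ker, Units.ext_iff, Units.coe_map, Units.val_one]
    rw [RingHom.toMonoidHom_eq_coe, MonoidHom.coe_coe, ← map_one (Ideal.Quotient.mk (Ideal.span {(2:O)^k})), Ideal.Quotient.eq,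
      Ideal.mem_span_singleton]
    constructor
    · rintro ⟨a, ha⟩; exact ⟨a, by rw [← ha]; ring⟩
    · rintro ⟨a, ha⟩; exact ⟨a, by rw [ha]; ring⟩
  have unit_of : ∀ (k : ℕ) (a : O), k ≠ 0 → ∃ u : Oˣ, (u : O) = 1 + 2^k * a := by
    intro k a hk
    have : IsUnit (1 + 2^k * a) := by
      by_contra hc
      have h1 : 1 + 2^k * a ∈ IsLocalRing.maximalIdeal O := (IsLocalRing.mem_maximalIdeal _).2 hc
      have h3 : 2^k * a ∈ IsLocalRing.maximalIdeal O :=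
        Ideal.mul_mem_right _ _ (Ideal.pow_mem_of_mem _ h2m k (Nat.pos_of_ne_zero hk))
      have h4 := Ideal.sub_mem _ h1 h3
      simp at h4
    exact ⟨this.unit, rfl⟩
  have hfinq : Finite (O ⧸ Ideal.span {(2:O)}) := Nat.finite_of_card_ne_zero (hq ▸ hq0)
  have hB3 : (B 3).index ≠ 0 := by
    have : Finite (O ⧸ (Ideal.span {(2:O)^3})) := by
      rw [← Ideal.span_singleton_pow]
      exact Ideal.finite_quotient_pow (Submodule.fg_span_singleton _) 3
    rw [Subgroup.index_ker]
    exact Nat.card_pos.ne'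
  have hne2 : ∀ k : ℕ, (2:O)^k ≠ 0 := fun k => pow_ne_zero k h2
  have hrel : (B 4).relIndex (B 3) = q := by
    choose g hg using fun u : B 3 => (memB 3 u).1 u.2
    let φ : B 3 →* Multiplicative (O ⧸ Ideal.span {(2:O)}) :=
      MonoidHom.mk' (fun u => Multiplicative.ofAdd (Ideal.Quotient.mk _ (g u))) (by
        intro u v
        rw [← ofAdd_add, ← map_add]
        congr 1
        rw [Ideal.Quotient.eq, Ideal.mem_span_singleton]
        refine ⟨4 * g u * g v, ?_⟩
        apply mul_left_cancel₀ (hne2 3)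
        have := hg (u * v)
        simp only [Subgroup.coe_mul, Units.val_mul, hg] at this
        linear_combination -this)
    have hφs : Function.Surjective φ := by
      intro y
      obtain ⟨a, ha⟩ := Ideal.Quotient.mk_surjective (Multiplicative.toAdd y)
      obtain ⟨u, hu⟩ := unit_of 3 a (by norm_num)
      refine ⟨⟨u, (memB 3 u).2 ⟨a, hu⟩⟩, ?_⟩
      have h5 := hg ⟨u, (memB 3 u).2 ⟨a, hu⟩⟩
      have : g ⟨u, (memB 3 u).2 ⟨a, hu⟩⟩ = a := by
        apply mul_left_cancel₀ (hne2 3)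
        have h6 : (u:O) = _ := h5
        linear_combination hu - h6
      simp [φ, this, ha]
    have hker : φ.ker = (B 4).subgroupOf (B 3) := by
      ext u
      rw [MonoidHom.mem_ker, Subgroup.mem_subgroupOf, memB]
      have : φ u = 1 ↔ Ideal.Quotient.mk (Ideal.span {(2:O)}) (g u) = 0 := by
        simp only [φ, MonoidHom.mk'_apply]; exact Iff.rfl
      rw [this, Ideal.Quotient.eq_zero_iff_mem, Ideal.mem_span_singleton]
      constructor
      · rintro ⟨a, ha⟩; exact ⟨a, by rw [hg, ha]; ring⟩
      · rintro ⟨a, ha⟩; refine ⟨a, mul_left_cancel₀ (hne2 3) ?_⟩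
        rw [hg] at ha; linear_combination ha
    rw [Subgroup.relIndex, ← hker, Subgroup.index_ker, MonoidHom.range_eq_top.2 hφs,
      Subgroup.card_top, ← hq]
    exact Nat.card_congr Multiplicative.toAdd
  have hmap : (B 3).map f = B 4 := by
    ext v
    rw [Subgroup.mem_map, memB]
    constructor
    · rintro ⟨u, hu, rfl⟩
      obtain ⟨a, ha⟩ := (memB 3 u).1 hu
      exact ⟨a + 4 * a^2, by simp only [f, powMonoidHom_apply, Units.val_pow_eq_pow_val, ha]; ring⟩
    · rintro ⟨y, hy⟩
      obtain ⟨x, hx⟩ := hens y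
      obtain ⟨u, hu⟩ := unit_of 3 x (by norm_num)
      refine ⟨u, (memB 3 u).2 ⟨x, hu⟩, ?_⟩
      ext
      simp only [f, powMonoidHom_apply, Units.val_pow_eq_pow_val, hu, hy]
      linear_combination hx
  have hle : B 4 ≤ B 3 := by
    intro u hu
    obtain ⟨a, ha⟩ := (memB 4 u).1 hu
    exact (memB 3 u).2 ⟨2 * a, by rw [ha]; ring⟩
  have hkerf : ∀ u, u ∈ f.ker ↔ u = 1 ∨ u = -1 := by
    intro u
    rw [MonoidHom.mem_ker]
    simp only [f, powMonoidHom_apply]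
    rw [Units.ext_iff, Units.ext_iff, Units.ext_iff]; simp
  have hneg : (-1 : Oˣ) ∉ B 3 := by
    intro h
    obtain ⟨a, ha⟩ := (memB 3 _).1 h
    simp only [Units.val_neg, Units.val_one] at ha
    have : (2:O) * (1 + 2^2 * a) = 0 := by linear_combination -ha
    obtain ⟨u, hu⟩ := unit_of 2 a (by norm_num)
    rw [← hu] at this
    rcases mul_eq_zero.1 this with h | h
    · exact h2 h
    · exact u.ne_zero h
  have hrel2 : (B 3).relIndex f.ker = 2 := by
    have : (B 3) ⊓ f.ker = ⊥ := by
      rw [eq_bot_iff]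
      rintro u ⟨h1, h3⟩
      rcases (hkerf u).1 h3 with rfl | rfl
      · simp
      · exact absurd h1 hneg
    rw [← Subgroup.inf_relIndex_right, this, Subgroup.relIndex_bot_left]
    have h6 : (1 : Oˣ) ≠ -1 := by intro h; apply hneg; rw [← h]; exact one_mem _
    have : (f.ker : Set Oˣ) = {1, -1} := by ext u; simp [hkerf]
    have h7 : Nat.card (f.ker : Set Oˣ) = 2 := by
      rw [this, Nat.card_coe_set_eq, Set.ncard_pair h6]
    exact h7
  have e1 : (B 4).relIndex (B 3) * (B 3).index = (B 4).index := Subgroup.relIndex_mul_index hle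
  have e2 : (B 4).index = (B 3 ⊔ f.ker).index * f.range.index := by
    rw [← hmap, Subgroup.index_map]
  have e3 : (B 3).relIndex (B 3 ⊔ f.ker) * (B 3 ⊔ f.ker).index = (B 3).index :=
    Subgroup.relIndex_mul_index le_sup_left
  rw [Subgroup.relIndex_sup_left, hrel2] at e3
  rw [hrel, e2, ← e3] at e1
  have h8 : (B 3 ⊔ f.ker).index ≠ 0 := by
    intro h; rw [h] at e3; exact hB3 (by rw [← e3])
  apply mul_left_cancel₀ h8
  rw [← e1]; ring

theorem A_frac {O F : Type*} [CommRing O] [IsDomain O] [IsDiscreteValuationRing O] [Field F]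
    [Algebra O F] [IsFractionRing O F] :
    (powMonoidHom 2 : Fˣ →* Fˣ).range.index = 2 * (powMonoidHom 2 : Oˣ →* Oˣ).range.index := by
  obtain ⟨p, hp⟩ := IsDiscreteValuationRing.exists_irreducible O
  set i : Oˣ →* Fˣ := Units.map (algebraMap O F : O →* F)
  have hinj : Function.Injective i := Units.map_injective (IsFractionRing.injective O F)
  have hpF : algebraMap O F p ≠ 0 := by
    simpa using hp.ne_zero
  let P : Fˣ := Units.mk0 _ hpF
  have hP : (P : F) = algebraMap O F p := rfl
  have hrep : ∀ x : Fˣ, ∃ (n : ℤ) (u : Oˣ), x = P^n * i u := by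
    intro x
    obtain ⟨a, b, hb, hab⟩ := IsFractionRing.div_surjective (A := O) (x : F)
    have hb0 : b ≠ 0 := nonZeroDivisors.ne_zero hb
    have ha0 : a ≠ 0 := by
      rintro rfl; simp at hab; exact x.ne_zero hab.symm
    obtain ⟨n, u, rfl⟩ := IsDiscreteValuationRing.eq_unit_mul_pow_irreducible ha0 hp
    obtain ⟨k, v, rfl⟩ := IsDiscreteValuationRing.eq_unit_mul_pow_irreducible hb0 hp
    refine ⟨n - k, u * v⁻¹, ?_⟩
    have : x = (P^n * i u) * (P^k * i v)⁻¹ := by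
      ext
      rw [← hab]
      simp only [map_mul, map_pow, Units.val_mul, Units.val_pow_eq_pow_val, hP, i, Units.coe_map, MonoidHom.coe_coe,
        Units.val_inv_eq_inv_val, div_eq_mul_inv]
      ring
    rw [this, zpow_sub, map_mul, map_inv, zpow_natCast, zpow_natCast, mul_inv]
    exact mul_mul_mul_comm _ _ _ _
  have hpos : ∀ (n : ℕ) (u : Oˣ), P^n = i u → n = 0 := by
    intro n u h
    have : algebraMap O F (p^n) = algebraMap O F u := by
      have := congrArg Units.val h
      simpa [i, hP] using this
    have := IsFractionRing.injective O F this
    by_contra hn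
    have h1 : IsUnit (p^n) := this ▸ u.isUnit
    exact hp.not_isUnit ((isUnit_pow_iff hn).1 h1)
  have huniq : ∀ (n : ℤ) (u : Oˣ), P^n = i u → n = 0 := by
    intro n u h
    rcases Int.eq_nat_or_neg n with ⟨k, rfl | rfl⟩
    · rw [zpow_natCast] at h; simp [hpos k u h]
    · rw [zpow_neg, zpow_natCast, inv_eq_iff_eq_inv, ← map_inv] at h; simp [hpos k _ h]
  set f : Fˣ →* Fˣ := powMonoidHom 2
  set g : Oˣ →* Oˣ := powMonoidHom 2
  have h1 : f.range ⊓ i.range = g.range.map i := by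
    ext x
    constructor
    · rintro ⟨⟨y, rfl⟩, ⟨u, hu⟩⟩
      obtain ⟨n, v, rfl⟩ := hrep y
      have : P^(n+n) = i (u * (v*v)⁻¹) := by
        rw [map_mul, hu, map_inv]
        rw [eq_mul_inv_iff_mul_eq]
        simp only [f, powMonoidHom_apply, pow_two, zpow_add]
        rw [map_mul, mul_mul_mul_comm]
      have := huniq _ _ this
      have hn : n = 0 := by omega
      subst hn
      exact ⟨v^2, ⟨v, rfl⟩, by simp [f]⟩
    · rintro ⟨_, ⟨v, rfl⟩, rfl⟩
      exact ⟨⟨i v, by simp [f, g]⟩, ⟨_, rfl⟩⟩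
  have h2 : f.range.relIndex i.range = g.range.index := by
    rw [← Subgroup.inf_relIndex_right, h1, MonoidHom.range_eq_map i,
      Subgroup.relIndex_map_map_of_injective _ _ hinj, Subgroup.relIndex_top_right]
  have h3 : (f.range ⊔ i.range).index = 2 := by
    rw [Subgroup.index_eq_two_iff]
    have key : ∀ (n : ℤ) (u : Oˣ), P^n * i u ∈ f.range ⊔ i.range ↔ Even n := by
      intro n u
      constructor
      · intro h
        obtain ⟨a, ⟨y, rfl⟩, b, ⟨v, rfl⟩, hab⟩ := Subgroup.mem_sup.1 h
        obtain ⟨k, w, rfl⟩ := hrep y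
        have : P^(n - (k + k)) = i (w*w*v*u⁻¹) := by
          rw [zpow_sub, map_mul, map_mul, map_mul, map_inv, eq_mul_inv_iff_mul_eq, mul_right_comm,
            ← hab, mul_inv_eq_iff_eq_mul]
          simp only [f, powMonoidHom_apply, pow_two, zpow_add]
          rw [mul_mul_mul_comm, mul_assoc, mul_comm]
        exact ⟨k, by have := huniq _ _ this; omega⟩
      · rintro ⟨k, rfl⟩
        refine Subgroup.mul_mem_sup ⟨P^k, ?_⟩ ⟨u, rfl⟩
        simp only [f, powMonoidHom_apply, pow_two, zpow_add]
    refine ⟨P, fun b => ?_⟩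
    obtain ⟨n, u, rfl⟩ := hrep b
    rw [mul_comm, ← mul_assoc, ← zpow_one_add, key, key]
    rw [add_comm, Int.even_add_one]
    by_cases h : Even n <;> simp [h]
  have h4 := Subgroup.relIndex_mul_index (le_sup_left : f.range ≤ f.range ⊔ i.range)
  rw [Subgroup.relIndex_sup_left, h2, h3] at h4
  rw [← h4, mul_comm]

theorem A_int_iff (F : Type*) [Field F] [Algebra ℚ_[2] F] [Algebra.IsAlgebraic ℚ_[2] F]
    [Algebra ℤ_[2] F] [IsScalarTower ℤ_[2] ℚ_[2] F] (x : F) :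
    IsIntegral ℤ_[2] x ↔ spectralNorm ℚ_[2] F x ≤ 1 := by
  have hx : IsIntegral ℚ_[2] x := (Algebra.IsAlgebraic.isAlgebraic x).isIntegral
  unfold spectralNorm
  rw [spectralValue_le_one_iff (minpoly.monic hx)]
  constructor
  · intro h n
    have := minpoly.isIntegrallyClosed_eq_field_fractions' ℚ_[2] h
    rw [this, Polynomial.coeff_map]
    exact PadicInt.norm_le_one _
  · intro h
    have hl : minpoly ℚ_[2] x ∈ Polynomial.lifts (algebraMap ℤ_[2] ℚ_[2]) := by
      rw [Polynomial.lifts_iff_coeff_lifts]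
      intro n
      exact ⟨⟨_, h n⟩, rfl⟩
    obtain ⟨q, hq, -, hqm⟩ := Polynomial.lifts_and_degree_eq_and_monic hl (minpoly.monic hx)
    refine ⟨q, hqm, ?_⟩
    have : Polynomial.aeval x (minpoly ℚ_[2] x) = 0 := minpoly.aeval _ _
    rw [← hq, Polynomial.aeval_map_algebraMap] at this
    exact this

theorem A_norm_two {F : Type*} [Field F] [Algebra ℚ_[2] F] [Algebra.IsAlgebraic ℚ_[2] F] :
    spectralMulAlgNorm ℚ_[2] F 2 = 1/2 := by
  have h := spectralNorm_extends (K := ℚ_[2]) (L := F) 2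
  rw [map_ofNat] at h
  rw [spectralMulAlgNorm_def, h]
  have := Padic.norm_p (p := 2)
  simpa using this

theorem A_hensel_aux {F : Type*} [Field F] [Algebra ℚ_[2] F] [Algebra.IsAlgebraic ℚ_[2] F]
    (z z' y : F) (h1 : z + z' = -1) (h2 : z * z' = -(4 * y))
    (hy : spectralMulAlgNorm ℚ_[2] F y ≤ 1) (hlt : spectralMulAlgNorm ℚ_[2] F z < 1) :
    spectralMulAlgNorm ℚ_[2] F z' = 1 ∧ spectralMulAlgNorm ℚ_[2] F z ≤ 1/4 := by
  set N := spectralMulAlgNorm ℚ_[2] F with hN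
  have hna : ∀ a b : F, N (a + b) ≤ max (N a) (N b) := isNonarchimedean_spectralNorm
  have h1N : N 1 = 1 := map_one N
  have hneg : ∀ a, N (-a) = N a := fun a => map_neg_eq_map N a
  have hz1 : N z' ≤ 1 := by
    have : z' = -1 + -z := by linear_combination h1
    rw [this]
    refine (hna _ _).trans ?_
    rw [hneg, hneg, h1N]; exact max_le le_rfl hlt.le
  have hz2 : 1 ≤ N z' := by
    by_contra hc
    push Not at hc
    have := hna z z'
    rw [h1, hneg, h1N] at this
    exact absurd (this.trans_lt (max_lt hlt hc)) (lt_irrefl _)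
  have hz := le_antisymm hz1 hz2
  refine ⟨hz, ?_⟩
  have h3 : N z * N z' = N 4 * N y := by rw [← map_mul, ← map_mul, h2, hneg]
  have h4 : N 4 = 1/4 := by
    rw [show (4:F) = 2 * 2 by norm_num, map_mul, A_norm_two]; norm_num
  rw [hz, h4, mul_one] at h3
  rw [h3]; linarith

theorem A_hensel (F : Type*) [Field F] [Algebra ℚ_[2] F] [FiniteDimensional ℚ_[2] F] (y : F)
    (hy : spectralMulAlgNorm ℚ_[2] F y ≤ 1) :
    ∃ x : F, spectralMulAlgNorm ℚ_[2] F x ≤ 1 ∧ (1 + 8 * x)^2 = 1 + 16 * y := by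
  have hc0 : CharZero F := charZero_of_injective_algebraMap (algebraMap ℚ_[2] F).injective
  have hsq : IsSquare (1 + 16 * y) := by
    by_contra hns
    let Ω := AlgebraicClosure F
    have : Algebra.IsAlgebraic ℚ_[2] Ω := Algebra.IsAlgebraic.trans ℚ_[2] F Ω
    have hc0 : CharZero Ω := charZero_of_injective_algebraMap (algebraMap ℚ_[2] Ω).injective
    obtain ⟨s, hs⟩ := IsAlgClosed.exists_pow_nat_eq (algebraMap F Ω (1 + 16 * y)) (n := 2) (by norm_num)
    have hirr : Irreducible (Polynomial.X ^ 2 - Polynomial.C (1 + 16 * y)) := by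
      rw [X_pow_sub_C_irreducible_iff_of_prime Nat.prime_two]
      intro b hb
      exact hns ⟨b, by rw [← hb]; ring⟩
    have hroot : ∀ t : Ω, t^2 = algebraMap F Ω (1 + 16 * y) →
        minpoly F t = Polynomial.X ^ 2 - Polynomial.C (1 + 16 * y) := by
      intro t ht
      refine (minpoly.eq_of_irreducible_of_monic hirr ?_ (Polynomial.monic_X_pow_sub_C _ (by norm_num))).symm
      simp [ht]
    have hmin : minpoly F s = minpoly F (-s) := by
      rw [hroot s hs, hroot (-s) (by rw [neg_sq, hs])]
    obtain ⟨σ, hσ⟩ := (Normal.minpoly_eq_iff_mem_orbit (F := F) Ω).1 hmin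
    have hσ' : σ (-s) = s := hσ
    set N := spectralMulAlgNorm ℚ_[2] Ω with hN
    let σ' : Ω ≃ₐ[ℚ_[2]] Ω := σ.restrictScalars ℚ_[2]
    let z : Ω := (s - 1)/2
    let z' : Ω := (-s - 1)/2
    have hσz : σ' z' = z := by
      show σ ((-s - 1)/2) = (s-1)/2
      rw [map_div₀, map_sub, hσ', map_one, map_ofNat]
    have hNz : N z' = N z := by
      rw [← hσz]; exact spectralNorm_eq_of_equiv σ' z'
    have e1 : z + z' = -1 := by simp only [z, z']; ring
    have e2 : z * z' = -(4 * algebraMap F Ω y) := by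
      simp only [z, z']
      rw [map_add, map_mul, map_one, map_ofNat] at hs
      linear_combination (-1/4 : Ω) * hs
    have hyN : N (algebraMap F Ω y) ≤ 1 := by
      have : N (algebraMap F Ω y) = spectralMulAlgNorm ℚ_[2] F y := by
        rw [spectralMulAlgNorm_def, spectralMulAlgNorm_def]
        exact spectralNorm.eq_of_tower y |>.symm
      rw [this]; exact hy
    have hlt : N z < 1 := by
      have h3 : N z * N z' = N 4 * N (algebraMap F Ω y) := by
        rw [← map_mul, ← map_mul, e2, map_neg_eq_map]
      have h4 : N 4 = 1/4 := by
        rw [show (4:Ω) = 2 * 2 by norm_num, map_mul, A_norm_two]; norm_num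
      rw [hNz, h4] at h3
      have := apply_nonneg N z
      nlinarith
    have := (A_hensel_aux z z' _ e1 e2 hyN hlt).1
    rw [hNz] at this
    linarith
  obtain ⟨s, hs⟩ := hsq
  replace hs := hs.symm
  set N := spectralMulAlgNorm ℚ_[2] F with hN
  have main : ∀ s : F, s * s = 1 + 16 * y → N ((s-1)/2) < 1 →
      ∃ x : F, N x ≤ 1 ∧ (1 + 8 * x)^2 = 1 + 16 * y := by
    intro s hs hlt
    have h := (A_hensel_aux ((s-1)/2) ((-s-1)/2) y (by ring) (by linear_combination (-1/4:F) * hs) hy hlt).2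
    refine ⟨(s-1)/8, ?_, by rw [← hs]; ring⟩
    have h3 : N ((s-1)/2) = N ((s-1)/8) * (N 2 * N 2) := by
      rw [← map_mul, ← map_mul]; congr 1; ring
    rw [A_norm_two] at h3
    rw [h3] at h
    linarith
  have e1 : (s-1)/2 + (-s-1)/2 = -1 := by ring
  rcases lt_or_ge (N ((s-1)/2)) 1 with h | h
  · exact main s hs h
  · refine main (-s) (by rw [neg_mul_neg, hs]) ?_
    have h3 : N ((s-1)/2) * N ((-s-1)/2) = N 4 * N y := by
      rw [← map_mul, ← map_mul, ← map_neg_eq_map]; congr 1; linear_combination (1/4:F) * hs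
    have h4 : N 4 = 1/4 := by
      rw [show (4:F) = 2 * 2 by norm_num, map_mul, A_norm_two]; norm_num
    rw [h4] at h3
    have := apply_nonneg N ((-s-1)/2)
    nlinarith

theorem A_card_quot (R S : Type*) [CommRing R] [CommRing S] [Algebra R S] [IsLocalRing R]
    [Module.Finite R S] [Module.Free R S] :
    Nat.card (S ⧸ Ideal.map (algebraMap R S) (IsLocalRing.maximalIdeal R)) =
      Nat.card (R ⧸ IsLocalRing.maximalIdeal R) ^ Module.finrank R S := by
  rw [← IsLocalRing.finrank_quotient_map (R := R) (S := S)]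
  let : Field (R ⧸ IsLocalRing.maximalIdeal R) := Ideal.Quotient.field _
  have : Module.Finite (R ⧸ IsLocalRing.maximalIdeal R)
      (S ⧸ Ideal.map (algebraMap R S) (IsLocalRing.maximalIdeal R)) :=
        Module.Finite.of_restrictScalars_finite R _ _
  exact Module.natCard_eq_pow_finrank (K := R ⧸ IsLocalRing.maximalIdeal R)
      (V := S ⧸ Ideal.map (algebraMap R S) (IsLocalRing.maximalIdeal R))

theorem A_index (F : Type*) [Field F] [Algebra ℚ_[2] F] [FiniteDimensional ℚ_[2] F] :
    (powMonoidHom 2 : Fˣ →* Fˣ).range.index = 2 ^ (Module.finrank ℚ_[2] F + 2) := by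
  have hc0 : CharZero F := charZero_of_injective_algebraMap (algebraMap ℚ_[2] F).injective
  let : Algebra ℤ_[2] F := ((algebraMap ℚ_[2] F).comp (algebraMap ℤ_[2] ℚ_[2])).toAlgebra
  have : IsScalarTower ℤ_[2] ℚ_[2] F := IsScalarTower.of_algebraMap_eq (fun _ => rfl)
  have : Module.IsTorsionFree ℤ_[2] F := by
    rw [Module.isTorsionFree_iff_algebraMap_injective]
    exact (algebraMap ℚ_[2] F).injective.comp (IsFractionRing.injective ℤ_[2] ℚ_[2])
  let O := integralClosure ℤ_[2] F
  have : IsDedekindDomain O := integralClosure.isDedekindDomain ℤ_[2] ℚ_[2] F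
  have : IsFractionRing O F :=
    IsIntegralClosure.isFractionRing_of_finite_extension ℤ_[2] ℚ_[2] F O
  have : Module.Finite ℤ_[2] O := IsIntegralClosure.finite ℤ_[2] ℚ_[2] F O
  have : Module.Free ℤ_[2] O := IsIntegralClosure.module_free ℤ_[2] ℚ_[2] F O
  have hrank : Module.finrank ℤ_[2] O = Module.finrank ℚ_[2] F :=
    IsIntegralClosure.rank ℤ_[2] ℚ_[2] F O
  set N := spectralMulAlgNorm ℚ_[2] F with hN
  have hmem : ∀ x : F, x ∈ O ↔ N x ≤ 1 := fun x => A_int_iff F x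
  have : ValuationRing O := by
    rw [ValuationRing.iff_isInteger_or_isInteger O F]
    intro x
    rcases le_total (N x) 1 with h | h
    · exact Or.inl ⟨⟨x, (hmem x).2 h⟩, rfl⟩
    · refine Or.inr ⟨⟨x⁻¹, (hmem _).2 ?_⟩, rfl⟩
      rw [map_inv₀]; exact inv_le_one_of_one_le₀ h
  have h2O : (2 : O) ≠ 0 := two_ne_zero
  have h2n : ¬ IsUnit (2 : O) := by
    intro h
    obtain ⟨u, hu⟩ := h
    have h3 : (2 : O) * (u⁻¹ : Oˣ) = 1 := by rw [← hu]; simp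
    have h4 : (2 : F) * ((u⁻¹ : Oˣ) : O) = 1 := congrArg Subtype.val h3
    have h5 : N 2 * N ((u⁻¹ : Oˣ) : O) = 1 := by rw [← map_mul, h4, map_one]
    rw [A_norm_two] at h5
    have := (hmem _).1 ((u⁻¹ : Oˣ) : O).2
    linarith
  have hnf : ¬ IsField O := by
    intro h
    obtain ⟨b, hb⟩ := h.mul_inv_cancel h2O
    exact h2n (IsUnit.of_mul_eq_one b hb)
  have : IsDiscreteValuationRing O := by
    have := ((IsDiscreteValuationRing.TFAE O hnf).out 0 1)
    exact this.2 ‹_›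
  have hcard : Nat.card (O ⧸ Ideal.span {(2:O)}) = 2 ^ Module.finrank ℚ_[2] F := by
    have hmap : Ideal.map (algebraMap ℤ_[2] O) (IsLocalRing.maximalIdeal ℤ_[2]) = Ideal.span {(2:O)} := by
      rw [PadicInt.maximalIdeal_eq_span_p, Ideal.map_span, Set.image_singleton, map_natCast]
      rfl
    have hk : Nat.card (ℤ_[2] ⧸ IsLocalRing.maximalIdeal ℤ_[2]) = 2 :=
      (Nat.card_congr (PadicInt.residueField (p := 2)).toEquiv).trans (Nat.card_zmod 2)
    rw [← hrank, ← hmap, A_card_quot, hk]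
  have hcore := A_core (O := O) _ hcard (by positivity) h2O ((IsLocalRing.mem_maximalIdeal _).2 h2n) (by
    intro y
    obtain ⟨x, hx, hxy⟩ := A_hensel F (y : F) ((hmem _).1 y.2)
    exact ⟨⟨x, (hmem x).2 hx⟩, Subtype.ext (by push_cast; exact hxy)⟩)
  rw [A_frac (O := O) (F := F), hcore]
  ring

/-- The subgroup of squares in the unit group. -/
abbrev sqU (F : Type*) [Field F] : Subgroup Fˣ := (powMonoidHom 2 : Fˣ →* Fˣ).range

theorem mem_sqU {F : Type*} [Field F] (u : Fˣ) : u ∈ sqU F ↔ IsSquare (u : F) := by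
  constructor
  · rintro ⟨v, rfl⟩
    exact ⟨v, by simp [pow_two]⟩
  · rintro ⟨b, hb⟩
    have hb0 : b ≠ 0 := by rintro rfl; simp at hb
    exact ⟨Units.mk0 b hb0, by ext; simp [hb, pow_two]⟩

theorem B_span {F K : Type*} [Field F] [Field K] [Algebra F K]
    (h2 : Module.finrank F K = 2) (x : K) (hx : x ∉ (algebraMap F K).range) (y : K) :
    ∃ p q : F, y = algebraMap F K p + algebraMap F K q * x := by
  have hfd : FiniteDimensional F K := Module.finite_of_finrank_pos (by omega)
  have hli : LinearIndependent F ![(1:K), x] := by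
    rw [LinearIndependent.pair_iff]
    intro p q hpq
    rw [Algebra.smul_def, Algebra.smul_def, mul_one] at hpq
    have hq : q = 0 := by
      by_contra hq
      have hq' : algebraMap F K q ≠ 0 := by simpa using hq
      apply hx
      refine ⟨-p / q, ?_⟩
      rw [map_div₀, map_neg, div_eq_iff hq']
      linear_combination -hpq
    subst hq
    simp at hpq
    exact ⟨hpq, rfl⟩
  have htop := hli.span_eq_top_of_card_eq_finrank' (by simp [h2])
  have hy : y ∈ Submodule.span F (Set.range ![(1:K), x]) := htop ▸ Submodule.mem_top
  rw [Matrix.range_cons, Matrix.range_cons, Matrix.range_empty, Set.union_empty, Set.singleton_union,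
    Submodule.mem_span_pair] at hy
  obtain ⟨p, q, h⟩ := hy
  exact ⟨p, q, by rw [← h, Algebra.smul_def, Algebra.smul_def, mul_one]⟩

theorem B_exists {F K : Type*} [Field F] [CharZero F] [Field K] [Algebra F K]
    (h2 : Module.finrank F K = 2) :
    ∃ (a : Fˣ) (s : K), s^2 = algebraMap F K a ∧ ¬ IsSquare (a : F) := by
  have : CharZero K := charZero_of_injective_algebraMap (algebraMap F K).injective
  obtain ⟨x, hx⟩ : ∃ x : K, x ∉ (algebraMap F K).range := by
    by_contra! hc
    have : (⊥ : Subalgebra F K) = ⊤ := by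
      rw [eq_top_iff]; intro x _; exact Algebra.mem_bot.2 (hc x)
    rw [Subalgebra.bot_eq_top_iff_finrank_eq_one] at this
    omega
  obtain ⟨p, q, hpq⟩ := B_span h2 x hx (x * x)
  set s := x - algebraMap F K (q / 2) with hs
  have hsn : s ∉ (algebraMap F K).range := by
    rintro ⟨b, hb⟩
    exact hx ⟨b + q/2, by rw [map_add, hb, hs]; ring⟩
  have hs2 : s^2 = algebraMap F K (p + q^2/4) := by
    simp only [hs, map_add, map_div₀, map_pow, map_ofNat]
    linear_combination hpq
  have hns : ¬ IsSquare (p + q^2/4) := by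
    rintro ⟨b, hb⟩
    rw [hb, map_mul, ← pow_two, sq_eq_sq_iff_eq_or_eq_neg] at hs2
    rcases hs2 with h | h
    · exact hsn ⟨b, h.symm⟩
    · exact hsn ⟨-b, by rw [h, map_neg]⟩
  have ha0 : p + q^2/4 ≠ 0 := by intro h; rw [h] at hns; exact hns ⟨0, by simp⟩
  exact ⟨Units.mk0 _ ha0, s, hs2, hns⟩

section quad
variable {F K : Type*} [Field F] [CharZero F] [Field K] [Algebra F K]

/-- Inclusion of unit groups. -/
abbrev iU (F K : Type*) [Field F] [Field K] [Algebra F K] : Fˣ →* Kˣ :=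
  Units.map (algebraMap F K).toMonoidHom

/-- Norm on unit groups. -/
noncomputable abbrev nU (F K : Type*) [Field F] [Field K] [Algebra F K] : Kˣ →* Fˣ :=
  Units.map (Algebra.norm F)

theorem B_not_mem (a : Fˣ) (s : K) (hs : s^2 = algebraMap F K a)
    (ha : ¬ IsSquare (a : F)) : s ∉ (algebraMap F K).range := by
  rintro ⟨b, rfl⟩
  apply ha
  rw [← map_pow] at hs
  exact ⟨b, by rw [← (algebraMap F K).injective hs, pow_two]⟩

theorem B_indep (a : Fˣ) (s : K) (hs : s^2 = algebraMap F K a)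
    (ha : ¬ IsSquare (a : F)) (p q p' q' : F) (h : algebraMap F K p + algebraMap F K q * s =
    algebraMap F K p' + algebraMap F K q' * s) : p = p' ∧ q = q' := by
  have hq : q = q' := by
    by_contra hq
    have hq' : algebraMap F K (q - q') ≠ 0 := by simpa [sub_eq_zero] using hq
    apply B_not_mem a s hs ha
    refine ⟨(p' - p) / (q - q'), ?_⟩
    rw [map_div₀, div_eq_iff hq', map_sub, map_sub]
    linear_combination -h
  subst hq
  exact ⟨(algebraMap F K).injective (by linear_combination h), rfl⟩

theorem B_sigma (h2 : Module.finrank F K = 2) (a : Fˣ) (s : K) (hs : s^2 = algebraMap F K a)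
    (ha : ¬ IsSquare (a : F)) : ∃ σ : K ≃ₐ[F] K, σ s = -s ∧ (∀ τ : K ≃ₐ[F] K, τ = 1 ∨ τ = σ) ∧
    (∀ x, algebraMap F K (Algebra.norm F x) = x * σ x) := by
  classical
  have : Algebra.IsQuadraticExtension F K := ⟨h2⟩
  have hfd : FiniteDimensional F K := inferInstance
  have hg : IsGalois F K := inferInstance
  have hcard : Nat.card (K ≃ₐ[F] K) = 2 := by rw [IsGalois.card_aut_eq_finrank, h2]
  rw [Nat.card_eq_two_iff' (1 : K ≃ₐ[F] K)] at hcard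
  obtain ⟨σ, hσ, huniq⟩ := hcard
  have hall : ∀ τ : K ≃ₐ[F] K, τ = 1 ∨ τ = σ := by
    intro τ
    by_cases h : τ = 1
    · exact Or.inl h
    · exact Or.inr (huniq τ h)
  refine ⟨σ, ?_, hall, ?_⟩
  · have h1 : (σ s)^2 = s^2 := by rw [← map_pow, hs, AlgEquiv.commutes]
    rcases sq_eq_sq_iff_eq_or_eq_neg.1 h1 with h | h
    · exfalso
      apply hσ
      ext x
      obtain ⟨p, q, rfl⟩ := B_span h2 s (B_not_mem a s hs ha) x
      simp [h]
    · exact h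
  · intro x
    rw [Algebra.norm_eq_prod_automorphisms]
    have : (Finset.univ : Finset (K ≃ₐ[F] K)) = {1, σ} := by
      ext τ; simpa using hall τ
    rw [this, Finset.prod_pair (Ne.symm hσ)]
    rfl

theorem B_norm (h2 : Module.finrank F K = 2) (a : Fˣ) (s : K) (hs : s^2 = algebraMap F K a)
    (ha : ¬ IsSquare (a : F)) (p q : F) :
    Algebra.norm F (algebraMap F K p + algebraMap F K q * s) = p^2 - a * q^2 := by
  obtain ⟨σ, hσ, -, hn⟩ := B_sigma h2 a s hs ha
  apply (algebraMap F K).injective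
  rw [hn]
  simp only [map_add, map_mul, hσ, AlgEquiv.commutes, map_sub, map_pow]
  linear_combination -(algebraMap F K q)^2 * hs

theorem B_comap_mem (h2 : Module.finrank F K = 2) (a : Fˣ) (s : K) (hs : s^2 = algebraMap F K a)
    (ha : ¬ IsSquare (a : F)) (u : Fˣ) : u ∈ (sqU K).comap (iU F K) ↔ u ∈ sqU F ∨ u * a ∈ sqU F := by
  have hK : CharZero K := charZero_of_injective_algebraMap (algebraMap F K).injective
  rw [Subgroup.mem_comap, mem_sqU, mem_sqU, mem_sqU]
  show IsSquare (algebraMap F K u) ↔ _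
  constructor
  · rintro ⟨x, hx⟩
    obtain ⟨p, q, rfl⟩ := B_span h2 s (B_not_mem a s hs ha) x
    have : algebraMap F K u + algebraMap F K 0 * s =
        algebraMap F K (p^2 + a * q^2) + algebraMap F K (2 * p * q) * s := by
      simp only [map_add, map_mul, map_pow, map_zero, map_ofNat]
      linear_combination hx + (algebraMap F K q)^2 * hs
    obtain ⟨h3, h4⟩ := B_indep a s hs ha _ _ _ _ this
    have h5 : p = 0 ∨ q = 0 := by simpa using h4.symm
    rcases h5 with rfl | rfl
    · right; exact ⟨a * q, by rw [Units.val_mul, h3]; ring⟩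
    · left; exact ⟨p, by rw [h3]; ring⟩
  · rintro (⟨b, hb⟩ | ⟨b, hb⟩)
    · exact ⟨algebraMap F K b, by rw [hb, map_mul]⟩
    · have ha0 : algebraMap F K a ≠ 0 := by simp
      refine ⟨algebraMap F K b / s, ?_⟩
      have hs0 : s * s ≠ 0 := by rw [← pow_two, hs]; exact ha0
      rw [div_mul_div_comm, eq_div_iff hs0, ← pow_two s, hs, ← map_mul, ← map_mul, ← hb, Units.val_mul]

theorem B_comap (h2 : Module.finrank F K = 2) (a : Fˣ) (s : K) (hs : s^2 = algebraMap F K a)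
    (ha : ¬ IsSquare (a : F)) : 2 * ((sqU K).comap (iU F K)).index = (sqU F).index := by
  have hle : sqU F ≤ (sqU K).comap (iU F K) := fun u hu => (B_comap_mem h2 a s hs ha u).2 (Or.inl hu)
  rw [← Subgroup.relIndex_mul_index hle]
  congr 1
  symm
  rw [Subgroup.relIndex, Subgroup.index_eq_two_iff]
  have hsqa : a * a ∈ sqU F := ⟨a, by simp [pow_two]⟩
  refine ⟨⟨a, (B_comap_mem h2 a s hs ha a).2 (Or.inr hsqa)⟩, ?_⟩
  rintro ⟨b, hb⟩
  simp only [Subgroup.mem_subgroupOf, Subgroup.coe_mul]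
  have hb' := (B_comap_mem h2 a s hs ha b).1 hb
  have ha' : a ∉ sqU F := by rw [mem_sqU]; exact ha
  by_cases h : b ∈ sqU F
  · right; refine ⟨h, fun h' => ha' ?_⟩
    exact (Subgroup.mul_mem_cancel_left _ h).1 h'
  · left; exact ⟨hb'.resolve_left h, h⟩

theorem B_H0 (h2 : Module.finrank F K = 2) (a : Fˣ) (s : K) (hs : s^2 = algebraMap F K a)
    (ha : ¬ IsSquare (a : F)) : (sqU F).comap (nU F K) = (iU F K).range ⊔ sqU K := by
  have hK : CharZero K := charZero_of_injective_algebraMap (algebraMap F K).injective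
  obtain ⟨σ, hσ, -, hn⟩ := B_sigma h2 a s hs ha
  apply le_antisymm
  · rintro x ⟨c, hc⟩
    -- N x = c ^ 2
    have hc' : Algebra.norm F (x : K) = (c:F)^2 := by
      have := congrArg Units.val hc; simpa using this.symm
    have hx : (x:K) * σ x = (algebraMap F K c)^2 := by rw [← hn, hc', map_pow]
    have hc0 : algebraMap F K c ≠ 0 := by simp
    -- find z with x * σ z = c * z
    have : ∃ z : Kˣ, (x:K) * σ z = algebraMap F K c * z := by
      by_cases h : (x : K) + algebraMap F K c = 0
      · have hs0 : s ≠ 0 := by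
          rintro rfl; rw [zero_pow two_ne_zero] at hs; exact absurd hs.symm (by simp)
        refine ⟨Units.mk0 s hs0, ?_⟩
        simp only [Units.val_mk0, hσ]
        linear_combination -s * h
      · refine ⟨Units.mk0 _ h, ?_⟩
        simp only [Units.val_mk0, map_add, AlgEquiv.commutes]
        linear_combination hx
    obtain ⟨z, hz⟩ := this
    -- x = c z / σ z = c z^2 / N z
    have e : x = iU F K (c * (nU F K z)⁻¹) * z^2 := by
      have hz' : iU F K (nU F K z) = z * (Units.map (σ : K →* K) z) := by
        ext; exact hn z
      have hx' : x * Units.map (σ : K →* K) z = iU F K c * z := by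
        ext; exact hz
      rw [map_mul, map_inv, hz', mul_inv, eq_mul_inv_of_mul_eq hx', pow_two]
      calc iU F K c * z * (Units.map (σ : K →* K) z)⁻¹ = iU F K c * (z⁻¹ * (Units.map (σ : K →* K) z)⁻¹) * (z * z) := by
            rw [mul_assoc, mul_assoc]; congr 1
            rw [mul_comm z⁻¹, mul_assoc, ← mul_assoc z⁻¹, inv_mul_cancel, one_mul, mul_comm]
        _ = _ := rfl
    rw [e]
    exact Subgroup.mul_mem_sup ⟨_, rfl⟩ ⟨z, rfl⟩
  · rw [sup_le_iff]
    constructor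
    · rintro _ ⟨c, rfl⟩
      refine ⟨c, ?_⟩
      ext
      have := Algebra.norm_algebraMap (S := K) (c : F)
      rw [h2] at this
      simpa using this.symm
    · rintro _ ⟨z, rfl⟩
      exact ⟨nU F K z, by simp⟩

theorem B_rel (h2 : Module.finrank F K = 2) (a : Fˣ) (s : K) (hs : s^2 = algebraMap F K a)
    (ha : ¬ IsSquare (a : F)) : (sqU F).relIndex (nU F K).range * ((sqU K).comap (iU F K)).index = (sqU K).index := by
  rw [← Subgroup.index_comap, B_H0 h2 a s hs ha, Subgroup.index_comap, mul_comm,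
    ← Subgroup.relIndex_sup_right]
  exact Subgroup.relIndex_mul_index le_sup_right

theorem B_neg_one (h2 : Module.finrank F K = 2) (a : Fˣ) (s : K) (hs : s^2 = algebraMap F K a)
    (ha : ¬ IsSquare (a : F)) : (-1 : Fˣ) ∈ (nU F K).range ↔ ∃ p q : F, p^2 - a * q^2 = -1 := by
  constructor
  · rintro ⟨x, hx⟩
    obtain ⟨p, q, hpq⟩ := B_span h2 s (B_not_mem a s hs ha) x
    refine ⟨p, q, ?_⟩
    rw [← B_norm h2 a s hs ha, ← hpq]
    simpa using congrArg Units.val hx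
  · rintro ⟨p, q, hpq⟩
    rw [← B_norm h2 a s hs ha] at hpq
    have : algebraMap F K p + algebraMap F K q * s ≠ 0 := by
      intro h
      rw [B_norm h2 a s hs ha] at hpq
      have h' : algebraMap F K p + algebraMap F K q * s = algebraMap F K 0 + algebraMap F K 0 * s := by
        simp [h]
      obtain ⟨rfl, rfl⟩ := B_indep a s hs ha _ _ _ _ h'
      simp at hpq
    exact ⟨Units.mk0 _ this, by ext; simpa using hpq⟩

open Classical in
theorem B_inv (h2 : Module.finrank F K = 2) (a : Fˣ) (s : K) (hs : s^2 = algebraMap F K a)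
    (ha : ¬ IsSquare (a : F)) : (sqU K).relIndex (((sqU K).comap (iU F K)).comap (nU F K)) =
    ((sqU K).comap (iU F K)).index * (if ∃ p q : F, p^2 - a * q^2 = -1 then 2 else 1) := by
  set C := (sqU K).comap (iU F K) with hC
  have hleF : sqU F ≤ C := fun u hu => (B_comap_mem h2 a s hs ha u).2 (Or.inl hu)
  have hH0 := B_H0 h2 a s hs ha
  have h1 : sqU K ≤ (sqU F).comap (nU F K) := by rw [hH0]; exact le_sup_right
  have h3 : (sqU F).comap (nU F K) ≤ C.comap (nU F K) := Subgroup.comap_mono hleF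
  rw [← Subgroup.relIndex_mul_relIndex _ _ _ h1 h3]
  congr 1
  · rw [hH0, Subgroup.relIndex_sup_right, hC, Subgroup.index_comap]
  have ha' : a ∉ sqU F := by rw [mem_sqU]; exact ha
  have hsqa : a * a ∈ sqU F := ⟨a, by simp [pow_two]⟩
  -- norm of s
  have hs0 : s ≠ 0 := by
    rintro rfl; rw [zero_pow two_ne_zero] at hs; exact absurd hs.symm (by simp)
  have hns : nU F K (Units.mk0 s hs0) = -a := by
    ext
    have := B_norm h2 a s hs ha 0 1
    simpa using this
  rw [← B_neg_one h2 a s hs ha]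
  split_ifs with h
  · obtain ⟨y, hy⟩ := h
    have hna : nU F K (y * Units.mk0 s hs0) = a := by rw [map_mul, hy, hns]; simp
    rw [Subgroup.relIndex, Subgroup.index_eq_two_iff]
    refine ⟨⟨y * Units.mk0 s hs0, ?_⟩, ?_⟩
    · rw [Subgroup.mem_comap, hna]
      exact (B_comap_mem h2 a s hs ha a).2 (Or.inr hsqa)
    rintro ⟨b, hb⟩
    simp only [Subgroup.mem_subgroupOf, Subgroup.coe_mul, Subgroup.mem_comap, map_mul (nU F K) b, hna]
    have hb' := (B_comap_mem h2 a s hs ha _).1 hb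
    by_cases h : nU F K b ∈ sqU F
    · right; refine ⟨h, fun h' => ha' ?_⟩
      exact (Subgroup.mul_mem_cancel_left _ h).1 h'
    · left; exact ⟨hb'.resolve_left h, h⟩
  · rw [Subgroup.relIndex_eq_one]
    intro b hb
    rcases (B_comap_mem h2 a s hs ha _).1 hb with h' | h'
    · exact h'
    · exfalso
      obtain ⟨c, hc⟩ := h'
      apply h
      -- N b * a = c^2
      refine ⟨b * Units.mk0 s hs0 * (iU F K c)⁻¹, ?_⟩
      have hci : nU F K (iU F K c) = c^2 := by
        ext
        have := Algebra.norm_algebraMap (S := K) (c : F)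
        rw [h2] at this
        simpa using this
      rw [map_mul, map_mul, map_inv, hns, hci, mul_neg, ← hc, neg_mul]
      simp
end quad

section C1
variable {K Ω : Type*} [Field K] [CharZero K] [Field Ω] [Algebra K Ω]

theorem C_adjoin (a : Kˣ) (ha : a ∉ sqU K) (s : Ω) (hs : s^2 = algebraMap K Ω a) :
    Module.finrank K (IntermediateField.adjoin K {s}) = 2 := by
  have hirr : Irreducible (Polynomial.X ^ 2 - Polynomial.C (a : K)) := by
    rw [X_pow_sub_C_irreducible_iff_of_prime Nat.prime_two]
    intro b hb
    exact ha ((mem_sqU a).2 ⟨b, by rw [← hb]; ring⟩)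
  have hm : (Polynomial.X ^ 2 - Polynomial.C (a : K)).Monic := Polynomial.monic_X_pow_sub_C _ (by norm_num)
  have hev : Polynomial.aeval s (Polynomial.X ^ 2 - Polynomial.C (a : K)) = 0 := by simp [hs]
  have hmin := minpoly.eq_of_irreducible_of_monic hirr hev hm
  have hs_int : IsIntegral K s := ⟨_, hm, hev⟩
  rw [IntermediateField.adjoin.finrank hs_int, ← hmin, Polynomial.natDegree_X_pow_sub_C]

theorem C_mem_comap (L : IntermediateField K Ω) (a : Kˣ) :
    a ∈ (sqU L).comap (iU K L) ↔ ∃ s ∈ L, s^2 = algebraMap K Ω a := by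
  rw [Subgroup.mem_comap, mem_sqU]
  constructor
  · rintro ⟨x, hx⟩
    refine ⟨x, x.2, ?_⟩
    have := congrArg (algebraMap L Ω) hx
    rw [map_mul] at this
    rw [pow_two]; exact this.symm
  · rintro ⟨s, hsL, hs⟩
    refine ⟨⟨s, hsL⟩, ?_⟩
    apply (algebraMap L Ω).injective
    rw [map_mul, ← pow_two]
    exact hs.symm

theorem C_eq_adjoin (L : IntermediateField K Ω) (hL : Module.finrank K L = 2) (a : Kˣ)
    (ha : a ∉ sqU K) (s : Ω) (hsL : s ∈ L) (hs : s^2 = algebraMap K Ω a) :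
    L = IntermediateField.adjoin K {s} := by
  have hfd : FiniteDimensional K L := Module.finite_of_finrank_pos (by omega)
  symm
  apply IntermediateField.eq_of_le_of_finrank_eq
  · rw [IntermediateField.adjoin_le_iff]; simpa using hsL
  · rw [hL, C_adjoin a ha s hs]

theorem C_eq (L L' : IntermediateField K Ω) (hL : Module.finrank K L = 2)
    (hL' : Module.finrank K L' = 2) (a : Kˣ) (ha : a ∉ sqU K)
    (h : a ∈ (sqU L).comap (iU K L)) (h' : a ∈ (sqU L').comap (iU K L')) : L = L' := by
  obtain ⟨s, hsL, hs⟩ := (C_mem_comap L a).1 h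
  obtain ⟨t, htL, ht⟩ := (C_mem_comap L' a).1 h'
  have hsL' : s ∈ L' := by
    rcases sq_eq_sq_iff_eq_or_eq_neg.1 (hs.trans ht.symm) with h | h
    · rw [h]; exact htL
    · rw [h]; exact neg_mem htL
  rw [C_eq_adjoin L hL a ha s hsL hs, C_eq_adjoin L' hL' a ha s hsL' hs]

/-- Two nonsquares becoming squares in the same quadratic extension agree modulo squares. -/
theorem C_class (L : IntermediateField K Ω) (hL : Module.finrank K L = 2) (a b : Kˣ)
    (ha : a ∉ sqU K) (hb : b ∉ sqU K)
    (h : a ∈ (sqU L).comap (iU K L)) (h' : b ∈ (sqU L).comap (iU K L)) : b * a ∈ sqU K := by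
  obtain ⟨s, hsL, hs⟩ := (C_mem_comap L a).1 h
  have := B_comap_mem hL a (⟨s, hsL⟩ : L) (by apply (algebraMap L Ω).injective; exact hs)
    (by rwa [← mem_sqU]) b
  exact (this.1 h').resolve_left hb

theorem C_exists (L : IntermediateField K Ω) (hL : Module.finrank K L = 2) :
    ∃ a : Kˣ, a ∉ sqU K ∧ a ∈ (sqU L).comap (iU K L) := by
  obtain ⟨a, s, hs, ha⟩ := B_exists hL
  exact ⟨a, by rwa [mem_sqU], (C_mem_comap L a).2 ⟨s, s.2, by have := congrArg (algebraMap L Ω) hs; exact this⟩⟩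

theorem C_count [IsAlgClosed Ω] (H : Subgroup Kˣ) :
    Nat.card {L : IntermediateField K Ω // Module.finrank K L = 2 ∧
      ∃ a ∈ H, a ∉ sqU K ∧ a ∈ (sqU L).comap (iU K L)} = (sqU K).relIndex H - 1 := by
  classical
  have hrhs : (sqU K).relIndex H - 1 = Nat.card {c : H ⧸ (sqU K).subgroupOf H // c ≠ 1} := by
    rw [Subgroup.relIndex, Subgroup.index]
    have h1 : Nat.card {c : H ⧸ (sqU K).subgroupOf H // c = 1} = 1 := by simp
    by_cases hf : Finite (H ⧸ (sqU K).subgroupOf H)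
    · have := Nat.card_congr (Equiv.sumCompl (fun c : H ⧸ (sqU K).subgroupOf H => c = 1))
      rw [Nat.card_sum, h1] at this
      rw [← this]; simp
    · have hinf : Infinite (H ⧸ (sqU K).subgroupOf H) := not_finite_iff_infinite.1 hf
      have : Infinite {c : H ⧸ (sqU K).subgroupOf H // c ≠ 1} :=
        (Set.Finite.infinite_compl (Set.finite_singleton (1 : H ⧸ (sqU K).subgroupOf H))).to_subtype
      simp
  rw [hrhs]
  choose g hgH hgs hgL using fun L : {L : IntermediateField K Ω // Module.finrank K L = 2 ∧
      ∃ a ∈ H, a ∉ sqU K ∧ a ∈ (sqU L).comap (iU K L)} => L.2.2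
  have hne : ∀ a : H, (QuotientGroup.mk a : H ⧸ (sqU K).subgroupOf H) ≠ 1 ↔ (a : Kˣ) ∉ sqU K := by
    intro a
    rw [Ne, QuotientGroup.eq_one_iff, Subgroup.mem_subgroupOf]
  have heq : ∀ a b : H, (QuotientGroup.mk a : H ⧸ (sqU K).subgroupOf H) = QuotientGroup.mk b ↔
      (b * a : Kˣ) ∈ sqU K := by
    intro a b
    rw [QuotientGroup.eq, Subgroup.mem_subgroupOf]
    have hsq : (a * a : Kˣ) ∈ sqU K := ⟨a, by simp [pow_two]⟩
    rw [← Subgroup.mul_mem_cancel_right (sqU K) hsq]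
    simp only [Subgroup.coe_mul, Subgroup.coe_inv]
    rw [show (a:Kˣ)⁻¹ * b * (a * a) = b * a by
      rw [mul_comm (a:Kˣ)⁻¹, mul_assoc, ← mul_assoc (a:Kˣ)⁻¹, inv_mul_cancel, one_mul]]
  apply Nat.card_congr
  refine Equiv.ofBijective (fun L => ⟨QuotientGroup.mk ⟨g L, hgH L⟩, (hne _).2 (hgs L)⟩) ⟨?_, ?_⟩
  · intro L L' h
    have h := (heq _ _).1 (congrArg Subtype.val h)
    simp only at h
    apply Subtype.ext
    refine C_eq L.1 L'.1 L.2.1 L'.2.1 (g L) (hgs L) (hgL L) ?_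
    have h3 : g L' * g L ∈ (sqU L'.1).comap (iU K L'.1) := by
      obtain ⟨b, hb⟩ := h
      rw [← hb]
      exact ⟨iU K L'.1 b, by simp⟩
    exact (Subgroup.mul_mem_cancel_left _ (hgL L')).1 h3
  · rintro ⟨c, hc⟩
    obtain ⟨⟨a, haH⟩, rfl⟩ := QuotientGroup.mk_surjective c
    have ha : a ∉ sqU K := (hne _).1 hc
    obtain ⟨s, hs⟩ := IsAlgClosed.exists_pow_nat_eq (algebraMap K Ω a) (n := 2) (by norm_num)
    have hmem : a ∈ (sqU (IntermediateField.adjoin K {s})).comap (iU K _) :=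
      (C_mem_comap _ a).2 ⟨s, IntermediateField.mem_adjoin_simple_self K s, hs⟩
    let L : {L : IntermediateField K Ω // Module.finrank K L = 2 ∧
      ∃ a ∈ H, a ∉ sqU K ∧ a ∈ (sqU L).comap (iU K L)} :=
      ⟨IntermediateField.adjoin K {s}, C_adjoin a ha s hs, a, haH, ha, hmem⟩
    refine ⟨L, Subtype.ext ?_⟩
    apply (heq _ _).2
    have := C_class L.1 L.2.1 _ _ (hgs L) ha (hgL L) hmem
    exact this
end C1

section C2
variable {F Ω : Type*} [Field F] [CharZero F] [Field Ω] [Algebra F Ω] [IsAlgClosed Ω] [Normal F Ω]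

/-- The subgroup of `Kˣ` of classes giving extensions of `K` which are Galois over `F`. -/
noncomputable abbrev HU (F K : Type*) [Field F] [Field K] [Algebra F K] : Subgroup Kˣ :=
  ((sqU K).comap (iU F K)).comap (nU F K)

theorem C_galois_iff (K : IntermediateField F Ω) (hK : Module.finrank F K = 2)
    (L : IntermediateField K Ω) (hL : Module.finrank K L = 2) (a : Kˣ) (ha : a ∉ sqU K)
    (haL : a ∈ (sqU L).comap (iU K L)) :
    Normal F (L.restrictScalars F) ↔ a ∈ HU F K := by
  obtain ⟨d, t, ht, hd⟩ := B_exists hK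
  obtain ⟨σ, -, hall, hn⟩ := B_sigma hK d t ht hd
  obtain ⟨s, hsL, hs⟩ := (C_mem_comap L a).1 haL
  have : Algebra.IsQuadraticExtension F K := ⟨hK⟩
  have hKn : Normal F K := inferInstance
  have hs0 : s ≠ 0 := by
    rintro rfl; rw [zero_pow two_ne_zero] at hs; exact absurd hs.symm (by simp)
  have key : ∀ τ : Ω ≃ₐ[F] Ω, (τ s)^2 = algebraMap K Ω (τ.restrictNormal K a) := by
    intro τ
    rw [← map_pow, hs, AlgEquiv.restrictNormal_commutes]
  have hHU : a ∈ HU F K ↔ IsSquare ((a : K) * σ a) := by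
    rw [Subgroup.mem_comap, Subgroup.mem_comap, mem_sqU, ← hn]; rfl
  rw [hHU]
  constructor
  · intro hN
    obtain ⟨τ, hτ⟩ := AlgEquiv.restrictNormalHom_surjective (F := F) (K₁ := K) Ω σ
    have hτ' : τ.restrictNormal K = σ := hτ
    have hτs : τ s ∈ L := by
      have := (IntermediateField.normal_iff_forall_map_le').1 hN τ
      exact this ⟨s, hsL, rfl⟩
    -- a * σ a is a square in L
    let b : Kˣ := Units.map (σ : K →* K) a
    have hb : b ∈ (sqU L).comap (iU K L) := (C_mem_comap L b).2 ⟨τ s, hτs, by rw [key, hτ']; rfl⟩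
    have hbs : b ∉ sqU K := by
      intro h
      apply ha
      rw [mem_sqU] at h ⊢
      obtain ⟨c, hc⟩ := h
      refine ⟨σ.symm c, ?_⟩
      rw [← map_mul, ← hc]
      show (a : K) = σ.symm (σ a)
      rw [AlgEquiv.symm_apply_apply]
    have := C_class L hL b a hbs ha hb haL
    rw [mem_sqU] at this
    exact this
  · rintro ⟨c, hc⟩
    rw [IntermediateField.normal_iff_forall_map_le']
    rintro τ _ ⟨x, hx, rfl⟩
    have hx' : x ∈ L := hx
    show τ x ∈ L
    have hsn : (⟨s, hsL⟩ : L) ∉ (algebraMap K L).range := by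
      apply B_not_mem a
      · apply (algebraMap L Ω).injective; exact hs
      · rwa [← mem_sqU]
    obtain ⟨p, q, hpq⟩ := B_span hL ⟨s, hsL⟩ hsn ⟨x, hx'⟩
    have hpq' : x = algebraMap K Ω p + algebraMap K Ω q * s := congrArg (algebraMap L Ω) hpq
    have hτK : ∀ p : K, τ (algebraMap K Ω p) ∈ L := by
      intro p
      rw [← AlgEquiv.restrictNormal_commutes]
      exact L.algebraMap_mem _
    have hτs : τ s ∈ L := by
      rcases hall (τ.restrictNormal K) with h | h
      · have h1 := key τ
        rw [h, AlgEquiv.one_apply, ← hs] at h1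
        rcases sq_eq_sq_iff_eq_or_eq_neg.1 h1 with h2 | h2
        · rw [h2]; exact hsL
        · rw [h2]; exact neg_mem hsL
      · have h1 := key τ
        rw [h] at h1
        have h2 : (τ s * s)^2 = (algebraMap K Ω c)^2 := by
          rw [mul_pow, h1, hs, ← map_mul, mul_comm, hc, map_mul, pow_two]
        have h3 : τ s * s ∈ L := by
          rcases sq_eq_sq_iff_eq_or_eq_neg.1 h2 with h2 | h2
          · rw [h2]; exact L.algebraMap_mem _
          · rw [h2]; exact neg_mem (L.algebraMap_mem _)
        have h4 : τ s = τ s * s * s⁻¹ := by rw [mul_assoc, mul_inv_cancel₀ hs0, mul_one]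
        rw [h4]
        exact mul_mem h3 (inv_mem hsL)
    rw [hpq', map_add, map_mul]
    exact add_mem (hτK p) (mul_mem (hτK q) hτs)

theorem C_fib (K : IntermediateField F Ω) (hK : Module.finrank F K = 2) :
    Nat.card {L : IntermediateField F Ω // (Module.finrank F L = 4 ∧ IsGalois F L) ∧ K ≤ L} =
      (sqU K).relIndex (HU F K) - 1 := by
  rw [← C_count (Ω := Ω)]
  have hdeg : ∀ L : IntermediateField K Ω, Module.finrank F (L.restrictScalars F) =
      2 * Module.finrank K L := by
    intro L
    have := Module.finrank_mul_finrank F K L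
    rw [hK] at this
    exact this.symm
  have hiff : ∀ L : IntermediateField K Ω, (Module.finrank F (L.restrictScalars F) = 4 ∧
      IsGalois F (L.restrictScalars F)) ↔ (Module.finrank K L = 2 ∧
      ∃ a ∈ HU F K, a ∉ sqU K ∧ a ∈ (sqU L).comap (iU K L)) := by
    intro L
    rw [hdeg, show (2 * Module.finrank K L = 4) ↔ Module.finrank K L = 2 by omega]
    refine and_congr_right fun hL => ?_
    constructor
    · intro h
      obtain ⟨a, ha, haL⟩ := C_exists L hL
      exact ⟨a, (C_galois_iff K hK L hL a ha haL).1 h.to_normal, ha, haL⟩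
    · rintro ⟨a, haH, ha, haL⟩
      have hN := (C_galois_iff K hK L hL a ha haL).2 haH
      exact { to_isSeparable := Algebra.IsAlgebraic.isSeparable_of_perfectField, to_normal := hN }
  symm
  apply Nat.card_congr
  refine Equiv.ofBijective (fun L => ⟨L.1.restrictScalars F, (hiff _).2 L.2,
    fun x hx => L.1.algebraMap_mem ⟨x, hx⟩⟩) ⟨?_, ?_⟩
  · intro L L' h
    have := congrArg Subtype.val h
    exact Subtype.ext (IntermediateField.restrictScalars_injective F this)
  · rintro ⟨L, hL, hKL⟩
    refine ⟨⟨IntermediateField.extendScalars hKL, (hiff _).1 hL⟩, rfl⟩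

theorem C_pair (K₁ K₂ : IntermediateField F Ω) (h₁ : Module.finrank F K₁ = 2)
    (h₂ : Module.finrank F K₂ = 2) (hne : K₁ ≠ K₂) :
    ∃ L : IntermediateField F Ω, (Module.finrank F L = 4 ∧ IsGalois F L) ∧ (K₁ ≤ L ∧ K₂ ≤ L) ∧
      ∀ L' : IntermediateField F Ω, Module.finrank F L' = 4 → K₁ ≤ L' → K₂ ≤ L' → L' = L := by
  have : Algebra.IsQuadraticExtension F K₁ := ⟨h₁⟩
  have : Algebra.IsQuadraticExtension F K₂ := ⟨h₂⟩
  have hn₁ : Normal F K₁ := inferInstance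
  have hn₂ : Normal F K₂ := inferInstance
  have hfd₁ : FiniteDimensional F K₁ := inferInstance
  have hfd₂ : FiniteDimensional F K₂ := inferInstance
  have hfd : FiniteDimensional F (K₁ ⊔ K₂ : IntermediateField F Ω) := inferInstance
  have hle : Module.finrank F (K₁ ⊔ K₂ : IntermediateField F Ω) ≤ 4 := by
    have := IntermediateField.finrank_sup_le K₁ K₂
    rwa [h₁, h₂] at this
  have hdvd : 2 ∣ Module.finrank F (K₁ ⊔ K₂ : IntermediateField F Ω) := by
    rw [← h₁]; exact IntermediateField.finrank_dvd_of_le_right le_sup_left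
  have hpos : 0 < Module.finrank F (K₁ ⊔ K₂ : IntermediateField F Ω) := Module.finrank_pos
  have h2 : Module.finrank F (K₁ ⊔ K₂ : IntermediateField F Ω) ≠ 2 := by
    intro h
    apply hne
    have e1 := IntermediateField.eq_of_le_of_finrank_eq (le_sup_left : K₁ ≤ K₁ ⊔ K₂) (by rw [h, h₁])
    have e2 := IntermediateField.eq_of_le_of_finrank_eq (le_sup_right : K₂ ≤ K₁ ⊔ K₂) (by rw [h, h₂])
    rw [e1, ← e2]
  have h4 : Module.finrank F (K₁ ⊔ K₂ : IntermediateField F Ω) = 4 := by omega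
  refine ⟨K₁ ⊔ K₂, ⟨h4, ?_⟩, ⟨le_sup_left, le_sup_right⟩, ?_⟩
  · have hN : Normal F (K₁ ⊔ K₂ : IntermediateField F Ω) := inferInstance
    exact { to_isSeparable := Algebra.IsAlgebraic.isSeparable_of_perfectField, to_normal := hN }
  · intro L' hL' hl hr
    have : FiniteDimensional F L' := Module.finite_of_finrank_pos (by omega)
    exact (IntermediateField.eq_of_le_of_finrank_eq (sup_le hl hr) (by rw [h4, hL'])).symm

theorem C_group (G : Type*) [Group G] (h4 : Nat.card G = 4) :
    Nat.card {H : Subgroup G // Nat.card H = 2} = 1 ∨ Nat.card {H : Subgroup G // Nat.card H = 2} = 3 := by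
  classical
  have hfin : Finite G := Nat.finite_of_card_ne_zero (by omega)
  have : Fact (Nat.Prime 2) := ⟨Nat.prime_two⟩
  have hcomm : ∀ a b : G, a * b = b * a :=
    IsPGroup.commutative_of_card_eq_prime_sq (p := 2) (by rw [h4]; norm_num)
  let : CommGroup G := { ‹Group G› with mul_comm := hcomm }
  let f : G →* G := powMonoidHom 2
  have hf : ∀ g, g ∈ f.ker ↔ g^2 = 1 := fun g => by rw [MonoidHom.mem_ker]; rfl
  have hdvd : Nat.card f.ker ∣ 4 := h4 ▸ Subgroup.card_subgroup_dvd_card f.ker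
  have hbij : Nat.card {H : Subgroup G // Nat.card H = 2} = Nat.card {g : f.ker // g ≠ 1} := by
    symm
    apply Nat.card_congr
    have hord : ∀ g : {g : f.ker // g ≠ 1}, orderOf (g.1 : G) = 2 := by
      intro g
      refine orderOf_eq_prime ((hf _).1 g.1.2) ?_
      intro h
      exact g.2 (Subtype.ext h)
    refine Equiv.ofBijective (fun g => ⟨Subgroup.zpowers (g.1 : G), by rw [Nat.card_zpowers, hord]⟩) ⟨?_, ?_⟩
    · intro g g' h
      have h : Subgroup.zpowers (g.1 : G) = Subgroup.zpowers (g'.1 : G) := congrArg Subtype.val h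
      have hg : (g.1 : G) ∈ Subgroup.zpowers (g'.1 : G) := h ▸ Subgroup.mem_zpowers _
      have hc : Nat.card (Subgroup.zpowers (g'.1 : G)) = 2 := by rw [Nat.card_zpowers, hord]
      rw [Nat.card_eq_two_iff' (1 : Subgroup.zpowers (g'.1 : G))] at hc
      have e := hc.unique (y₁ := ⟨g.1, hg⟩) (y₂ := ⟨g'.1, Subgroup.mem_zpowers _⟩)
        (fun h => by
          have hh : (g.1 : G) = 1 := congrArg (Subgroup.subtype _) h
          exact g.2 (Subtype.ext hh))
        (fun h => by
          have hh : (g'.1 : G) = 1 := congrArg (Subgroup.subtype _) h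
          exact g'.2 (Subtype.ext hh))
      have ee : (g.1 : G) = g'.1 := congrArg (Subgroup.zpowers (g'.1 : G)).subtype e
      exact Subtype.ext (Subtype.ext ee)
    · rintro ⟨H, hH⟩
      obtain ⟨x, hx, -⟩ := (Nat.card_eq_two_iff' (1 : H)).1 hH
      have hx2 : (x : G)^2 = 1 := by
        have := pow_card_eq_one' (x := x)
        rw [hH] at this
        exact congrArg Subtype.val this
      have hx1 : (x : G) ≠ 1 := fun h => hx (Subtype.ext h)
      refine ⟨⟨⟨x, (hf _).2 hx2⟩, fun h => hx1 (congrArg Subtype.val h)⟩, Subtype.ext ?_⟩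
      apply Subgroup.eq_of_le_of_card_ge
      · rw [Subgroup.zpowers_le]; exact x.2
      · rw [hH, Nat.card_zpowers, orderOf_eq_prime hx2 hx1]
  have hne1 : Nat.card f.ker ≠ 1 := by
    intro h
    obtain ⟨g, hg⟩ := exists_prime_orderOf_dvd_card' (G := G) 2 (by rw [h4]; norm_num)
    rw [Subgroup.card_eq_one] at h
    have : g ∈ f.ker := (hf g).2 (by rw [← hg]; exact pow_orderOf_eq_one g)
    rw [h, Subgroup.mem_bot] at this
    rw [this, orderOf_one] at hg
    omega
  have hsum := Nat.card_congr (Equiv.sumCompl (fun g : f.ker => g = 1))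
  have h1 : Nat.card {g : f.ker // g = 1} = 1 := by simp
  rw [Nat.card_sum, h1] at hsum
  rw [hbij]
  have hle : Nat.card f.ker ≤ 4 := Nat.le_of_dvd (by norm_num) hdvd
  have h3 : Nat.card f.ker ≠ 3 := by intro h; rw [h] at hdvd; omega
  have h0 : Nat.card f.ker ≠ 0 := Nat.card_pos.ne'
  change 1 + Nat.card {g : f.ker // g ≠ 1} = _ at hsum
  omega

theorem C_sub (L : IntermediateField F Ω) (h4 : Module.finrank F L = 4) (hg : IsGalois F L) :
    Nat.card {K : IntermediateField F Ω // Module.finrank F K = 2 ∧ K ≤ L} = 1 ∨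
    Nat.card {K : IntermediateField F Ω // Module.finrank F K = 2 ∧ K ≤ L} = 3 := by
  have hfd : FiniteDimensional F L := Module.finite_of_finrank_pos (by omega)
  have e1 : Nat.card {K : IntermediateField F Ω // Module.finrank F K = 2 ∧ K ≤ L} =
      Nat.card {K : IntermediateField F L // Module.finrank F K = 2} := by
    symm
    apply Nat.card_congr
    refine Equiv.ofBijective (fun K => ⟨IntermediateField.lift K.1, ?_, IntermediateField.lift_le K.1⟩) ⟨?_, ?_⟩
    · exact ((IntermediateField.liftAlgEquiv K.1).toLinearEquiv.finrank_eq).symm.trans K.2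
    · intro K K' h
      exact Subtype.ext (IntermediateField.lift_injective _ (congrArg Subtype.val h))
    · rintro ⟨K, hK, hKL⟩
      refine ⟨⟨IntermediateField.restrict hKL, ?_⟩, Subtype.ext (IntermediateField.lift_restrict hKL)⟩
      rw [← hK]
      exact ((IntermediateField.restrictAlgEquiv hKL).toLinearEquiv.finrank_eq).symm
  have hcG : Nat.card (L ≃ₐ[F] L) = 4 := by rw [IsGalois.card_aut_eq_finrank, h4]
  have e2 : Nat.card {K : IntermediateField F L // Module.finrank F K = 2} =
      Nat.card {H : Subgroup (L ≃ₐ[F] L) // Nat.card H = 2} := by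
    apply Nat.card_congr
    refine Equiv.subtypeEquiv (IsGalois.intermediateFieldEquivSubgroup.toEquiv.trans OrderDual.ofDual) ?_
    intro K
    show Module.finrank F K = 2 ↔ Nat.card K.fixingSubgroup = 2
    rw [IsGalois.card_fixingSubgroup_eq_finrank]
    have := Module.finrank_mul_finrank F K L
    rw [h4] at this
    constructor
    · intro h; rw [h] at this; omega
    · intro h; rw [h] at this; omega
  rw [e1, e2]
  exact C_group _ hcG
end C2

theorem D_comb {A Q : Type*} [Finite Q] (R : Q → A → Prop) (P : Q → Prop) (t : ℕ) (ht : 0 < t)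
    (hk : ∀ L, Nat.card {K // R K L} = 1 ∨ Nat.card {K // R K L} = 3)
    (hpair : ∀ K₁ K₂, K₁ ≠ K₂ → ∃! L, R K₁ L ∧ R K₂ L)
    (hfin : ∀ K, Finite {L // R K L})
    (hP : ∀ K, P K → Nat.card {L // R K L} = 2 * t - 1)
    (hnP : ∀ K, ¬ P K → Nat.card {L // R K L} = t - 1)
    (hQ : Nat.card Q = 2 * t - 1) (hQP : Nat.card {K // P K} = t - 1) :
    3 * Nat.card A = (t - 1) * (5 * t - 1) := by
  classical
  have hA : Finite A := by
    have : Finite (Σ K, {L // R K L}) := inferInstance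
    refine Finite.of_surjective (fun x : (Σ K, {L // R K L}) => (x.2.1 : A)) ?_
    intro L
    have : Nonempty {K // R K L} := by
      have h0 : Nat.card {K // R K L} ≠ 0 := by rcases hk L with h | h <;> omega
      exact (Nat.card_ne_zero.1 h0).1
    obtain ⟨K, hK⟩ := this
    exact ⟨⟨K, L, hK⟩, rfl⟩
  have := Fintype.ofFinite Q
  have := Fintype.ofFinite A
  have c1 : ∀ L, Nat.card {K // R K L} = (Finset.univ.filter (fun K => R K L)).card := fun L => by
    rw [Nat.card_eq_fintype_card, Fintype.card_subtype]
  have c2 : ∀ K, Nat.card {L // R K L} = (Finset.univ.filter (fun L => R K L)).card := fun L => by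
    rw [Nat.card_eq_fintype_card, Fintype.card_subtype]
  have c3 : Nat.card {K // P K} = (Finset.univ.filter P).card := by
    rw [Nat.card_eq_fintype_card, Fintype.card_subtype]
  have s1 : ∑ K, (Finset.univ.filter (fun L => R K L)).card =
      ∑ L, (Finset.univ.filter (fun K => R K L)).card :=
    Finset.sum_card_bipartiteAbove_eq_sum_card_bipartiteBelow R
  have s2 : ∑ p ∈ (Finset.univ : Finset Q).offDiag,
        (Finset.univ.filter (fun L => R p.1 L ∧ R p.2 L)).card =
      ∑ L, ((Finset.univ : Finset Q).offDiag.filter (fun p => R p.1 L ∧ R p.2 L)).card :=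
    Finset.sum_card_bipartiteAbove_eq_sum_card_bipartiteBelow (fun (p : Q × Q) L => R p.1 L ∧ R p.2 L)
  have s3 : ∀ L, ((Finset.univ : Finset Q).offDiag.filter (fun p => R p.1 L ∧ R p.2 L)) =
      (Finset.univ.filter (fun K => R K L)).offDiag := by
    intro L; ext p; simp only [Finset.mem_filter, Finset.mem_offDiag, Finset.mem_univ]; tauto
  have s4 : ∑ p ∈ (Finset.univ : Finset Q).offDiag,
        (Finset.univ.filter (fun L => R p.1 L ∧ R p.2 L)).card = (Finset.univ : Finset Q).offDiag.card := by
    rw [Finset.card_eq_sum_ones]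
    refine Finset.sum_congr rfl fun p hp => ?_
    obtain ⟨L, hL, hu⟩ := hpair p.1 p.2 (Finset.mem_offDiag.1 hp).2.2
    rw [Finset.card_eq_one]
    refine ⟨L, ?_⟩
    ext L'
    simp only [Finset.mem_filter, Finset.mem_univ, true_and, Finset.mem_singleton]
    exact ⟨fun h => hu L' h, fun h => h ▸ hL⟩
  rw [s4] at s2
  have s5 : ∀ L, 3 + ((Finset.univ.filter (fun K => R K L)).offDiag).card =
      3 * (Finset.univ.filter (fun K => R K L)).card := by
    intro L
    rw [Finset.offDiag_card]
    have := hk L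
    rw [c1] at this
    rcases this with h | h <;> rw [h]
  have s6 : 3 * Fintype.card A + (Finset.univ : Finset Q).offDiag.card =
      3 * ∑ K, (Finset.univ.filter (fun L => R K L)).card := by
    rw [s1, s2, Finset.mul_sum, ← Finset.sum_congr rfl (fun L _ => s5 L), Finset.sum_add_distrib]
    simp only [s3]
    congr 1
    simp [mul_comm]
  have s7 : ∑ K, (Finset.univ.filter (fun L => R K L)).card =
      (2 * t - 1) * (t - 1) + (t - 1) * t := by
    have : ∀ K, (Finset.univ.filter (fun L => R K L)).card = (t - 1) + if P K then t else 0 := by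
      intro K
      rw [← c2]
      split_ifs with h
      · rw [hP K h]; omega
      · rw [hnP K h]; rfl
    simp only [this]
    rw [Finset.sum_add_distrib, ← Finset.sum_filter, Finset.sum_const, Finset.sum_const, ← c3, hQP,
      Finset.card_univ, ← Nat.card_eq_fintype_card, hQ, smul_eq_mul, smul_eq_mul]
  rw [s7, Finset.offDiag_card, Finset.card_univ, ← Nat.card_eq_fintype_card, ← Nat.card_eq_fintype_card, hQ] at s6
  obtain ⟨u, rfl⟩ : ∃ u, t = u + 1 := ⟨t - 1, by omega⟩
  have e1 : 2 * (u + 1) - 1 = 2 * u + 1 := by omega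
  have e2 : 5 * (u + 1) - 1 = 5 * u + 4 := by omega
  have e3 : (2*u+1)*(2*u+1) - (2*u+1) = (2*u+1)*(2*u) := by
    rw [Nat.sub_eq_iff_eq_add (by nlinarith)]; ring
  rw [e1, e3, Nat.add_sub_cancel] at s6
  rw [e2, Nat.add_sub_cancel]
  nlinarith

theorem D_norm {F E : Type*} [Field F] [CharZero F] [Field E] [Algebra F E] [Algebra ℚ_[2] F]
    [FiniteDimensional ℚ_[2] F] (hneg : ¬ IsSquare (-1 : F)) (h2 : Module.finrank F E = 2)
    (s : E) (hs : s ^ 2 = -1) :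
    (∀ a : Fˣ, a ∈ (nU F E).range ↔ ∃ p q : F, (a : F) = p ^ 2 + q ^ 2) ∧
    (sqU F).relIndex (nU F E).range = 2 ^ (Module.finrank ℚ_[2] F + 1) := by
  have hs' : s ^ 2 = algebraMap F E ((-1 : Fˣ) : F) := by rw [hs]; simp
  have hneg' : ¬ IsSquare ((-1 : Fˣ) : F) := by simpa using hneg
  constructor
  · intro a
    constructor
    · rintro ⟨v, rfl⟩
      obtain ⟨p, q, hpq⟩ := B_span h2 s (B_not_mem (-1) s hs' hneg') v
      refine ⟨p, q, ?_⟩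
      show Algebra.norm F (v : E) = _
      rw [hpq, B_norm h2 (-1) s hs' hneg']
      simp
    · rintro ⟨p, q, hpq⟩
      have hn := B_norm h2 (-1) s hs' hneg' p q
      have hn' : Algebra.norm F (algebraMap F E p + algebraMap F E q * s) = (a : F) := by
        rw [hn, hpq]; simp
      have : Module.Finite F E := Module.finite_of_finrank_pos (by omega)
      have h0 : algebraMap F E p + algebraMap F E q * s ≠ 0 := by
        intro h
        rw [h, Algebra.norm_zero] at hn'
        exact a.ne_zero hn'.symm
      exact ⟨Units.mk0 _ h0, Units.ext hn'⟩
  · let : Algebra ℚ_[2] E := ((algebraMap F E).comp (algebraMap ℚ_[2] F)).toAlgebra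
    have : IsScalarTower ℚ_[2] F E := IsScalarTower.of_algebraMap_eq (fun _ => rfl)
    have : Module.Finite F E := Module.finite_of_finrank_pos (by omega)
    have : FiniteDimensional ℚ_[2] E := Module.Finite.trans F E
    have hE := A_index E
    have hF := A_index F
    have hmul := Module.finrank_mul_finrank ℚ_[2] F E
    rw [h2] at hmul
    have h1 := B_comap h2 (-1) s hs' hneg'
    have h3 := B_rel h2 (-1) s hs' hneg'
    change (sqU E).index = _ at hE
    change (sqU F).index = _ at hF
    rw [hE, ← hmul] at h3
    rw [hF] at h1
    have h4 : ((sqU E).comap (iU F E)).index = 2 ^ (Module.finrank ℚ_[2] F + 1) := by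
      rw [pow_succ] at h1 ⊢; omega
    rw [h4] at h3
    apply Nat.eq_of_mul_eq_mul_right (pow_pos (two_pos) _) (h3.trans _)
    rw [← pow_add]
    congr 1
    ring

theorem D_sum {F : Type*} [Field F] (hneg : ¬ IsSquare (-1 : F)) (a : F) (ha : ¬ IsSquare a) :
    (∃ p q : F, p ^ 2 - a * q ^ 2 = -1) ↔ ∃ p q : F, a = p ^ 2 + q ^ 2 := by
  constructor
  · rintro ⟨p, q, h⟩
    have hq : q ≠ 0 := by
      rintro rfl
      exact hneg ⟨p, by rw [← h]; ring⟩
    refine ⟨p / q, 1 / q, ?_⟩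
    field_simp
    linear_combination -h
  · rintro ⟨p, q, h⟩
    have hq : q ≠ 0 := by
      rintro rfl
      exact ha ⟨p, by rw [h]; ring⟩
    refine ⟨p / q, 1 / q, ?_⟩
    field_simp
    linear_combination -h

theorem D_main (F : Type*) [Field F] [Algebra ℚ_[2] F] [FiniteDimensional ℚ_[2] F]
    (hneg : ¬ IsSquare (-1 : F)) :
    3 * Nat.card {L : IntermediateField F (AlgebraicClosure F) //
        Module.finrank F L = 4 ∧ IsGalois F L} =
      (2 ^ (Module.finrank ℚ_[2] F + 1) - 1) * (5 * 2 ^ (Module.finrank ℚ_[2] F + 1) - 1) := by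
  classical
  have : CharZero F := charZero_of_injective_algebraMap (algebraMap ℚ_[2] F).injective
  set t := 2 ^ (Module.finrank ℚ_[2] F + 1) with ht
  have htpos : 0 < t := pow_pos two_pos _
  have hF : (sqU F).index = 2 * t := by
    have := A_index F
    change (sqU F).index = _ at this
    rw [this, ht]; ring
  obtain ⟨i, hi⟩ : ∃ i : AlgebraicClosure F, i ^ 2 = -1 :=
    IsAlgClosed.exists_pow_nat_eq (-1) two_pos
  have hi' : i ^ 2 = algebraMap F (AlgebraicClosure F) ((-1 : Fˣ) : F) := by rw [hi]; simp
  have hneg' : (-1 : Fˣ) ∉ sqU F := by rw [mem_sqU]; simpa using hneg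
  have hE2 := C_adjoin (-1 : Fˣ) hneg' i hi'
  obtain ⟨hD, hDi⟩ := D_norm hneg hE2 (IntermediateField.AdjoinSimple.gen F i)
    (by apply (algebraMap _ (AlgebraicClosure F)).injective
        rw [map_pow, IntermediateField.AdjoinSimple.algebraMap_gen, hi]; simp)
  set D := (nU F (IntermediateField.adjoin F {i})).range with hDdef
  let Q := {K : IntermediateField F (AlgebraicClosure F) // Module.finrank F K = 2}
  let A := {L : IntermediateField F (AlgebraicClosure F) // Module.finrank F L = 4 ∧ IsGalois F L}
  have hQ : Nat.card Q = 2 * t - 1 := by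
    rw [← hF, ← Subgroup.relIndex_top_right, ← C_count (Ω := AlgebraicClosure F)]
    apply Nat.card_congr
    refine Equiv.subtypeEquivRight fun K => ⟨fun h => ⟨h, ?_⟩, fun h => h.1⟩
    obtain ⟨a, h1, h2⟩ := C_exists K h
    exact ⟨a, Subgroup.mem_top _, h1, h2⟩
  have hQfin : Finite Q := Nat.finite_of_card_ne_zero (by omega)
  let P : Q → Prop := fun K => ∃ a ∈ D, a ∉ sqU F ∧ a ∈ (sqU K.1).comap (iU F K.1)
  have hQP : Nat.card {K // P K} = t - 1 := by
    rw [ht, ← hDi, ← C_count (Ω := AlgebraicClosure F)]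
    apply Nat.card_congr
    exact (Equiv.subtypeSubtypeEquivSubtypeInter
      (fun K : IntermediateField F (AlgebraicClosure F) => Module.finrank F K = 2)
      (fun K => ∃ a ∈ D, a ∉ sqU F ∧ a ∈ (sqU K).comap (iU F K)))
  have hfibeq : ∀ K : Q, Nat.card {L : A // K.1 ≤ L.1} = t * (if P K then 2 else 1) - 1 := by
    intro K
    have e1 : Nat.card {L : A // K.1 ≤ L.1} =
        Nat.card {L : IntermediateField F (AlgebraicClosure F) //
          (Module.finrank F L = 4 ∧ IsGalois F L) ∧ K.1 ≤ L} :=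
      Nat.card_congr (Equiv.subtypeSubtypeEquivSubtypeInter _ _)
    obtain ⟨a, ha, haK⟩ := C_exists K.1 K.2
    have ha' : ¬ IsSquare (a : F) := by rwa [← mem_sqU]
    obtain ⟨s, hsK, hs⟩ := (C_mem_comap K.1 a).1 haK
    have hs' : (⟨s, hsK⟩ : K.1) ^ 2 = algebraMap F K.1 a := by
      apply (algebraMap K.1 (AlgebraicClosure F)).injective; exact hs
    have hinv := B_inv K.2 a ⟨s, hsK⟩ hs' ha'
    have hcom := B_comap K.2 a ⟨s, hsK⟩ hs' ha'
    rw [hF] at hcom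
    have hcom' : ((sqU K.1).comap (iU F K.1)).index = t := by omega
    have hPa : P K ↔ ∃ p q : F, p ^ 2 - (a : F) * q ^ 2 = -1 := by
      rw [D_sum hneg _ ha', ← hD]
      constructor
      · rintro ⟨b, hbD, hb, hbK⟩
        have hba := C_class K.1 K.2 a b ha hb haK hbK
        have hsq : sqU F ≤ D := by
          intro x hx
          obtain ⟨c, hc⟩ := (mem_sqU x).1 hx
          exact (hD x).2 ⟨c, 0, by rw [hc]; ring⟩
        exact (Subgroup.mul_mem_cancel_left D hbD).1 (hsq hba)
      · intro h; exact ⟨a, h, ha, haK⟩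
    rw [e1, C_fib K.1 K.2]
    change (sqU K.1).relIndex (HU F K.1) = _ at hinv
    rw [hinv, hcom']
    simp only [hPa]
  refine D_comb (A := A) (Q := Q) (fun K L => K.1 ≤ L.1) P t htpos ?_ ?_ ?_ ?_ ?_ hQ hQP
  · intro L
    have e : Nat.card {K : Q // K.1 ≤ L.1} = Nat.card {K : IntermediateField F (AlgebraicClosure F) //
        Module.finrank F K = 2 ∧ K ≤ L.1} :=
      Nat.card_congr (Equiv.subtypeSubtypeEquivSubtypeInter _ (fun K => K ≤ L.1))
    rw [e]
    exact C_sub L.1 L.2.1 L.2.2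
  · intro K₁ K₂ hne
    obtain ⟨L, hL, hle, hu⟩ := C_pair K₁.1 K₂.1 K₁.2 K₂.2 (fun h => hne (Subtype.ext h))
    exact ⟨⟨L, hL⟩, hle, fun L' h => Subtype.ext (hu L'.1 L'.2.1 h.1 h.2)⟩
  · intro K
    by_cases h1 : Nat.card {L : A // K.1 ≤ L.1} = 0
    · have := hfibeq K
      rw [h1] at this
      have ht2 : 2 ≤ t := by rw [ht, pow_succ]; have := Nat.pos_of_ne_zero (pow_ne_zero (Module.finrank ℚ_[2] F) two_ne_zero); omega
      split_ifs at this <;> omega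
    · exact Nat.finite_of_card_ne_zero h1
  · intro K h
    rw [hfibeq, if_pos h, mul_comm]
  · intro K h
    rw [hfibeq, if_neg h, mul_one]

theorem stmt17 (F : Type*) [Field F] [Algebra ℚ_[2] F] [FiniteDimensional ℚ_[2] F]
    (m : ℕ) (hm : Module.finrank ℚ_[2] F = m)
    (hμ4 : ¬ ∃ ζ : F, IsPrimitiveRoot ζ 4) :
    Nat.card {L : IntermediateField F (AlgebraicClosure F) //
        Module.finrank F L = 4 ∧ IsGalois F L ∧ ∀ σ τ : L ≃ₐ[F] L, σ * τ = τ * σ} =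
      (20 * 2 ^ (2 * m) - 12 * 2 ^ m + 1) / 3 := by
  have : CharZero F := charZero_of_injective_algebraMap (algebraMap ℚ_[2] F).injective
  have hneg : ¬ IsSquare (-1 : F) := by
    rintro ⟨z, hz⟩
    refine hμ4 ⟨z, ?_⟩
    have h2 : ¬ z ^ (2 ^ 1) = 1 := by
      rw [pow_one, sq, ← hz]
      norm_num
    have h4 : z ^ (2 ^ (1 + 1)) = 1 := by
      have : z ^ (2 ^ (1 + 1)) = (z * z) ^ 2 := by ring
      rw [this, ← hz]; norm_num
    have ho : orderOf z = 2 ^ (1 + 1) := orderOf_eq_prime_pow h2 h4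
    rw [IsPrimitiveRoot.iff_orderOf]
    exact ho
  have e : Nat.card {L : IntermediateField F (AlgebraicClosure F) //
        Module.finrank F L = 4 ∧ IsGalois F L ∧ ∀ σ τ : L ≃ₐ[F] L, σ * τ = τ * σ} =
      Nat.card {L : IntermediateField F (AlgebraicClosure F) //
        Module.finrank F L = 4 ∧ IsGalois F L} := by
    apply Nat.card_congr
    refine Equiv.subtypeEquivRight fun L => ⟨fun h => ⟨h.1, h.2.1⟩, fun h => ⟨h.1, h.2, ?_⟩⟩
    have : Fact (Nat.Prime 2) := ⟨Nat.prime_two⟩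
    have hg := h.2
    have hfd : FiniteDimensional F L := Module.finite_of_finrank_pos (by omega)
    have hc : Nat.card (L ≃ₐ[F] L) = 2 ^ 2 := by rw [IsGalois.card_aut_eq_finrank, h.1]; norm_num
    exact (IsPGroup.isMulCommutative_of_card_eq_prime_sq hc).is_comm.comm
  have hmain := D_main F hneg
  rw [← e, hm] at hmain
  have hp : 2 ^ (2 * m) = 2 ^ m * 2 ^ m := by rw [two_mul, pow_add]
  rw [pow_succ] at hmain
  rw [hp]
  have hx : 0 < 2 ^ m := pow_pos two_pos m
  generalize 2 ^ m = x at *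
  have key : (x * 2 - 1) * (5 * (x * 2) - 1) = 20 * (x * x) - 12 * x + 1 := by
    obtain ⟨y, rfl⟩ : ∃ y, x = y + 1 := ⟨x - 1, by omega⟩
    have e1 : (y + 1) * 2 - 1 = 2 * y + 1 := by omega
    have e2 : 5 * ((y + 1) * 2) - 1 = 10 * y + 9 := by omega
    have e3 : 20 * ((y + 1) * (y + 1)) = (20 * y * y + 28 * y + 8) + 12 * (y + 1) := by ring
    rw [e1, e2, e3, Nat.add_sub_cancel]
    ring
  rw [key] at hmain
  omega
end

section
/- Let F be a finite extension of ℚ₂ of degree m that contains a primitive fourth root of unity. Then the number |Ab(4)| of abelian extensions of F of degree 4 (inside a fixed algebraic closure of F) equals (32·2^{2m} − 12·2^m + 1)/3, i.e. 32·2^{2m}/3 − 4·2^m + 1/3. -/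
open Classical in
lemma aux_count_sub {G : Type*} [CommGroup G] [Fintype G] (q : ℕ) (hq : Nat.card G = q ^ 2)
    (h2 : (Finset.univ.filter (fun x : G => x ^ 2 = 1)).card = q) (h4 : ∀ x : G, x ^ 4 = 1) :
    6 * Nat.card {H : Subgroup G // Nat.card H = 4} = 3 * (q ^ 2 - q) + ((q-1)*(q-1)-(q - 1)) := by
  set S : Finset (Subgroup G) := Finset.univ.filter (fun H => Nat.card H = 4) with hS
  have hcS : Nat.card {H : Subgroup G // Nat.card H = 4} = S.card := by
    rw [Nat.card_eq_fintype_card, Fintype.card_subtype]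
  set A : Finset G := Finset.univ.filter (fun x => ¬ x ^ 2 = 1) with hA
  set K : Finset G := Finset.univ.filter (fun x => x ^ 2 = 1) with hK
  set B : Finset (G × G) := (K.erase 1).offDiag with hB
  have hAc : A.card = q ^ 2 - q := by
    have := Finset.card_filter_add_card_filter_not (s := (Finset.univ : Finset G))
      (fun x => x ^ 2 = 1)
    rw [Finset.card_univ, ← Nat.card_eq_fintype_card, hq] at this
    have t : K.card + A.card = q ^ 2 := by rw [← this]
    omega
  have hBc : B.card = (q-1)*(q-1)-(q - 1) := by
    rw [hB, Finset.offDiag_card, Finset.card_erase_of_mem (by simp [hK]), h2]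
  -- each element of A lies in exactly one
  have e1 : ∀ x ∈ A, (S.filter (fun H => x ∈ H)).card = 1 := by
    intro x hx
    have hx2 : ¬ x ^ 2 = 1 := by simpa [hA] using hx
    have ho : orderOf x = 4 := by
      have := orderOf_eq_prime_pow (x := x) (p := 2) (n := 1) (by simpa using hx2)
        (by simpa using h4 x)
      simpa using this
    rw [Finset.card_eq_one]
    refine ⟨Subgroup.zpowers x, ?_⟩
    ext H
    simp only [hS, Finset.mem_filter, Finset.mem_univ, true_and, Finset.mem_singleton]
    constructor
    · rintro ⟨h, hxH⟩
      refine (Subgroup.eq_of_le_of_card_ge (by simpa using hxH) ?_).symm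
      rw [h, Nat.card_zpowers, ho]
    · rintro rfl
      rw [Nat.card_zpowers, ho]
      simp
  have e2 : ∀ p ∈ B, (S.filter (fun H => p.1 ∈ H ∧ p.2 ∈ H)).card = 1 := by
    rintro ⟨x, y⟩ hp
    simp only [hB, hK, Finset.mem_offDiag, Finset.mem_erase, Finset.mem_filter, Finset.mem_univ,
      true_and] at hp
    obtain ⟨⟨hx1, hx⟩, ⟨hy1, hy⟩, hxy⟩ := hp
    have hxx : x * x = 1 := by rw [← sq, hx]
    have hyy : y * y = 1 := by rw [← sq, hy]
    have hxi : x⁻¹ = x := inv_eq_of_mul_eq_one_right hxx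
    have hyi : y⁻¹ = y := inv_eq_of_mul_eq_one_right hyy
    have hxy1 : x * y ≠ 1 := fun h => hxy (by rw [mul_eq_one_iff_eq_inv.mp h, hyi])
    have hxyx : x * y ≠ x := fun h => hy1 (by simpa using h)
    have hxyy : x * y ≠ y := fun h => hx1 (by simpa using h)
    let V : Subgroup G :=
      { carrier := ((({1, x, y, x * y} : Finset G)) : Set G)
        one_mem' := by simp
        mul_mem' := by
          intro a b ha hb
          simp only [Finset.coe_insert, Finset.coe_singleton, Set.mem_insert_iff,
            Set.mem_singleton_iff] at ha hb ⊢
          have r1 : x * (x * y) = y := by rw [← mul_assoc, hxx, one_mul]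
          have r2 : y * (x * y) = x := by rw [mul_left_comm, hyy, mul_one]
          have r3 : x * y * x = y := by rw [mul_comm, r1]
          have r4 : x * y * y = x := by rw [mul_comm, r2]
          have r5 : x * y * (x * y) = 1 := by rw [← mul_assoc, r3, hyy]
          have r6 : y * x = x * y := mul_comm _ _
          rcases ha with rfl | rfl | rfl | rfl <;> rcases hb with rfl | rfl | rfl | rfl <;>
            simp [hxx, hyy, r1, r2, r3, r4, r5, r6]
        inv_mem' := by
          intro a ha
          simp only [Finset.coe_insert, Finset.coe_singleton, Set.mem_insert_iff,
            Set.mem_singleton_iff] at ha ⊢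
          rcases ha with rfl | rfl | rfl | rfl <;> simp [hxi, hyi, mul_comm] }
    have hVc : Nat.card V = 4 := by
      change Nat.card ((({1, x, y, x * y} : Finset G)) : Set G) = 4
      rw [Nat.card_coe_set_eq, Set.ncard_coe_finset]
      rw [Finset.card_insert_of_notMem, Finset.card_insert_of_notMem,
        Finset.card_insert_of_notMem, Finset.card_singleton]
      · simpa using Ne.symm hxyy
      · simp only [Finset.mem_insert, Finset.mem_singleton, not_or]
        exact ⟨hxy, Ne.symm hxyx⟩
      · simp only [Finset.mem_insert, Finset.mem_singleton, not_or]
        exact ⟨Ne.symm hx1, Ne.symm hy1, Ne.symm hxy1⟩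
    have hmem : ∀ z, z ∈ V ↔ z = 1 ∨ z = x ∨ z = y ∨ z = x * y := by
      intro z
      change z ∈ ((({1, x, y, x * y} : Finset G)) : Set G) ↔ _
      simp
    rw [Finset.card_eq_one]
    refine ⟨V, ?_⟩
    ext H
    simp only [hS, Finset.mem_filter, Finset.mem_univ, true_and, Finset.mem_singleton]
    constructor
    · rintro ⟨h, hxH, hyH⟩
      refine (Subgroup.eq_of_le_of_card_ge ?_ ?_).symm
      · intro z hz
        rcases (hmem z).1 hz with rfl | rfl | rfl | rfl
        · exact one_mem _
        · exact hxH
        · exact hyH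
        · exact mul_mem hxH hyH
      · rw [h, hVc]
    · rintro rfl
      exact ⟨hVc, (hmem x).2 (by simp), (hmem y).2 (by simp)⟩
  have e3 : ∀ H ∈ S, 3 * (A.filter (fun x => x ∈ H)).card +
      (B.filter (fun p => p.1 ∈ H ∧ p.2 ∈ H)).card = 6 := by
    intro H hH
    have hH4 : Nat.card H = 4 := by simpa [hS] using hH
    set k := (K.filter (fun x => x ∈ H)).card with hk
    have c0 : (Finset.univ.filter (fun x => x ∈ H)).card = 4 := by
      rw [← hH4, Nat.card_eq_fintype_card, Fintype.card_subtype]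
    have c1 : (A.filter (fun x => x ∈ H)).card + k = 4 := by
      have := Finset.card_filter_add_card_filter_not (s := Finset.univ.filter (fun x => x ∈ H))
        (fun x => x ^ 2 = 1)
      rw [c0, Finset.filter_comm, Finset.filter_comm (fun x => x ∈ H)] at this
      have t : k + (A.filter (fun x => x ∈ H)).card = 4 := by rw [← this]
      omega
    have c2 : B.filter (fun p => p.1 ∈ H ∧ p.2 ∈ H) =
        ((K.filter (fun x => x ∈ H)).erase 1).offDiag := by
      ext ⟨a, b⟩
      simp only [hB, Finset.mem_filter, Finset.mem_offDiag, Finset.mem_erase]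
      tauto
    have c3 : (B.filter (fun p => p.1 ∈ H ∧ p.2 ∈ H)).card = (k-1)*(k-1)-(k-1) := by
      rw [c2, Finset.offDiag_card, Finset.card_erase_of_mem (by simp [hK, one_mem])]
    let T : Subgroup H := (powMonoidHom 2 : H →* H).ker
    have hT : Nat.card T = k := by
      have : Nat.card T = Nat.card (T.map H.subtype) :=
        (Nat.card_congr (T.equivMapOfInjective _ H.subtype_injective).toEquiv)
      rw [this, Nat.card_eq_fintype_card, Fintype.card_subtype, hk]
      congr 1
      ext x
      simp [T, hK, MonoidHom.mem_ker, Subtype.ext_iff, and_comm]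
    have hd : k ∣ 4 := by rw [← hT, ← hH4]; exact Subgroup.card_subgroup_dvd_card T
    have hk1 : k ≠ 1 := by
      intro h1
      have : Fact (Nat.Prime 2) := ⟨Nat.prime_two⟩
      obtain ⟨x, hx⟩ := exists_prime_orderOf_dvd_card' (G := H) 2 (by rw [hH4]; norm_num)
      have hb : T = ⊥ := by rw [← Subgroup.card_eq_one, hT, h1]
      have hxT : x ∈ T := by
        simp only [T, MonoidHom.mem_ker, powMonoidHom_apply]
        rw [← hx]; exact pow_orderOf_eq_one x
      rw [hb, Subgroup.mem_bot] at hxT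
      rw [hxT] at hx; simp at hx
    have hk4 : k ≤ 4 := Nat.le_of_dvd (by norm_num) hd
    have hka : (A.filter (fun x => x ∈ H)).card = 4 - k := by omega
    rw [c3, hka]
    have key : ∀ k ≤ 4, k ∣ 4 → k ≠ 1 → 3 * (4 - k) + ((k - 1) * (k - 1) - (k - 1)) = 6 := by
      decide
    exact key k hk4 hd hk1
  have s1 := Finset.sum_card_bipartiteAbove_eq_sum_card_bipartiteBelow (s := A) (t := S)
    (fun x H => x ∈ H)
  have s2 := Finset.sum_card_bipartiteAbove_eq_sum_card_bipartiteBelow (s := B) (t := S)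
    (fun p H => p.1 ∈ H ∧ p.2 ∈ H)
  simp only [Finset.bipartiteAbove, Finset.bipartiteBelow] at s1 s2
  rw [Finset.sum_congr rfl e1] at s1
  rw [Finset.sum_congr rfl e2] at s2
  have s3 := Finset.sum_congr rfl e3
  rw [Finset.sum_add_distrib, ← Finset.mul_sum, ← s1, ← s2] at s3
  simp only [Finset.sum_const, smul_eq_mul, mul_one] at s3
  rw [hcS, ← hAc, ← hBc]
  omega

/-- Abstract snake lemma for squaring. -/
lemma aux_snake {A B : Type*} [CommGroup A] [CommGroup B] (f : A →* B)
    (hf : Function.Injective f) (hfi : f.range.index ≠ 0)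
    (z : B) (hz : ∀ x : B, x ^ 2 = 1 ↔ x = 1 ∨ x = z) (hz2 : z ∉ f.range) :
    (powMonoidHom 2 : B →* B).range.index = 2 * (powMonoidHom 2 : A →* A).range.index := by
  have hzz : z ^ 2 = 1 := (hz z).2 (Or.inr rfl)
  have e : (powMonoidHom 2 : A →* A).range.map f = f.range.map (powMonoidHom 2) := by
    rw [MonoidHom.range_eq_map, MonoidHom.range_eq_map, Subgroup.map_map, Subgroup.map_map]
    congr 1
    ext x; simp
  have h1 := Subgroup.index_map (H := (powMonoidHom 2 : A →* A).range) f
  rw [e, Subgroup.index_map, (MonoidHom.ker_eq_bot_iff f).2 hf, sup_bot_eq] at h1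
  set N := f.range ⊔ (powMonoidHom 2 : B →* B).ker with hN
  have hker : (powMonoidHom 2 : B →* B).ker = Subgroup.zpowers z := by
    ext x
    simp only [MonoidHom.mem_ker, powMonoidHom_apply, hz]
    constructor
    · rintro (rfl | rfl)
      · exact one_mem _
      · exact Subgroup.mem_zpowers _
    · intro h
      rw [← hz]
      obtain ⟨k, rfl⟩ := h
      change (z ^ k) ^ 2 = 1
      rw [← zpow_natCast, zpow_comm, zpow_natCast, hzz, one_zpow]
  have h2 : f.range.relIndex N = 2 := by
    rw [hN, sup_comm, Subgroup.relIndex_sup_right, ← Subgroup.inf_relIndex_right]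
    have : f.range ⊓ (powMonoidHom 2 : B →* B).ker = ⊥ := by
      rw [eq_bot_iff]
      rintro x ⟨hx, hx2⟩
      have := (hz x).1 hx2
      rcases this with rfl | rfl
      · exact one_mem _
      · exact absurd hx hz2
    rw [this, Subgroup.relIndex_bot_left, hker, Nat.card_zpowers]
    refine orderOf_eq_prime hzz ?_
    rintro rfl
    exact hz2 (one_mem _)
  have h3 := Subgroup.relIndex_mul_index (show f.range ≤ N from le_sup_left)
  rw [h2] at h3
  have hN0 : N.index ≠ 0 := by
    intro h; rw [h] at h3; exact hfi (by omega)
  rw [← h3] at h1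
  have : N.index * (powMonoidHom 2 : B →* B).range.index = N.index * (2 * (powMonoidHom 2 : A →* A).range.index) := by
    rw [h1]; ring
  exact Nat.eq_of_mul_eq_mul_left (Nat.pos_of_ne_zero hN0) this

lemma aux_quot {B : Type*} [CommGroup B] (q : ℕ) (hq0 : q ≠ 0)
    (hq : (powMonoidHom 2 : B →* B).range.index = q)
    (z : B) (hz : ∀ x : B, x ^ 2 = 1 → x = 1 ∨ x = z ^ 2) :
    Nat.card (B ⧸ (powMonoidHom 4 : B →* B).range) = q ^ 2 ∧
    Nat.card ((powMonoidHom 2 : (B ⧸ (powMonoidHom 4 : B →* B).range) →* _).ker) = q := by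
  have e : (powMonoidHom 4 : B →* B).range = (powMonoidHom 2 : B →* B).range.map (powMonoidHom 2) := by
    rw [MonoidHom.range_eq_map, MonoidHom.range_eq_map, Subgroup.map_map]
    congr 1
    ext x; simp [← pow_mul]
  have h1 : (powMonoidHom 4 : B →* B).range.index = q ^ 2 := by
    rw [e, Subgroup.index_map, hq]
    have : (powMonoidHom 2 : B →* B).ker ≤ (powMonoidHom 2 : B →* B).range := by
      intro x hx
      rcases hz x hx with rfl | rfl
      · exact one_mem _
      · exact ⟨z, rfl⟩
    rw [sup_eq_left.2 this, hq, sq]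
  refine ⟨h1, ?_⟩
  set G := B ⧸ (powMonoidHom 4 : B →* B).range
  have hG : Nat.card G = q ^ 2 := h1
  have : Finite G := Nat.finite_of_card_ne_zero (by rw [hG]; positivity)
  have h2 : (powMonoidHom 2 : G →* G).range.index = q := by
    rw [← hq, ← Subgroup.index_comap_of_surjective _
      (QuotientGroup.mk'_surjective (powMonoidHom 4 : B →* B).range)]
    congr 1
    ext x
    simp only [Subgroup.mem_comap, MonoidHom.mem_range, powMonoidHom_apply]
    constructor
    · rintro ⟨y, hy⟩
      obtain ⟨y, rfl⟩ := QuotientGroup.mk'_surjective _ y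
      rw [← map_pow] at hy
      obtain ⟨w, ⟨c, rfl⟩, hw⟩ := (QuotientGroup.mk'_eq_mk' _).1 hy
      refine ⟨y * c ^ 2, ?_⟩
      rw [← hw, mul_pow, ← pow_mul]; rfl
    · rintro ⟨y, rfl⟩
      exact ⟨QuotientGroup.mk' _ y, by rw [map_pow]⟩
  have h3 := (powMonoidHom 2 : G →* G).range.card_mul_index
  have h4 := (powMonoidHom 2 : G →* G).ker.card_mul_index
  rw [Subgroup.index_ker, ← h3, h2, mul_comm] at h4
  refine Nat.eq_of_mul_eq_mul_left ?_ h4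
  exact Nat.card_pos

lemma aux_root {F E : Type*} [Field F] [Field E] [Algebra F E] {ζ : F} (hζ : IsPrimitiveRoot ζ 4)
    {x y : E} (hy : y ≠ 0) (h : x ^ 4 = y ^ 4) :
    ∃ c : Fˣ, x = algebraMap F E c * y := by
  have hζ' := hζ.map_of_injective (algebraMap F E).injective
  obtain ⟨i, -, hi⟩ := hζ'.eq_pow_of_pow_eq_one (ξ := x / y) (by
    rw [div_pow, h, div_self (pow_ne_zero _ hy)])
  refine ⟨(Units.mk0 ζ (hζ.ne_zero (by norm_num))) ^ i, ?_⟩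
  rw [eq_div_iff hy] at hi
  rw [← hi]
  simp

lemma aux_enough {F E : Type*} [Field F] [Field E] [Algebra F E] {ζ : F}
    (hζ : IsPrimitiveRoot ζ 4) {n : ℕ} (hn : n ∣ 4) : HasEnoughRootsOfUnity E n := by
  have hζ' := hζ.map_of_injective (algebraMap F E).injective
  have : HasEnoughRootsOfUnity E 4 := ⟨⟨_, hζ'⟩, inferInstance⟩
  exact HasEnoughRootsOfUnity.of_dvd E hn

lemma aux_kummer_card {F L : Type*} [Field F] [Field L] [Algebra F L] [FiniteDimensional F L]
    [IsGalois F L] {ζ : F} (hζ : IsPrimitiveRoot ζ 4)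
    (hcomm : ∀ σ τ : L ≃ₐ[F] L, σ * τ = τ * σ) (hexp : ∀ σ : L ≃ₐ[F] L, σ ^ 4 = 1)
    (S : Subgroup (Fˣ ⧸ (powMonoidHom 4 : Fˣ →* Fˣ).range))
    (hS : ∀ a : Fˣ, (QuotientGroup.mk' _ a ∈ S ↔ ∃ b : L, b ^ 4 = algebraMap F L a)) :
    Nat.card S = Nat.card (L ≃ₐ[F] L) := by
  let j : Fˣ →* Lˣ := Units.map (algebraMap F L : F →* L)
  have hj : Function.Injective j := Units.map_injective (algebraMap F L).injective
  let D : Subgroup Lˣ := j.range.comap (powMonoidHom 4)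
  let f2 : D →* (Fˣ ⧸ (powMonoidHom 4 : Fˣ →* Fˣ).range) :=
    (QuotientGroup.mk' _).comp ((MonoidHom.ofInjective hj).symm.toMonoidHom.comp
      ((powMonoidHom 4).subgroupComap j.range))
  have hf2 : ∀ (b : D) (a : Fˣ), j a = (b : Lˣ) ^ 4 → f2 b = QuotientGroup.mk' _ a := by
    intro b a h
    simp only [f2, MonoidHom.comp_apply]
    congr 1
    change (MonoidHom.ofInjective hj).symm _ = a
    rw [MulEquiv.symm_apply_eq]
    apply Subtype.ext
    exact h.symm
  have hD : ∀ b : D, ∃ a : Fˣ, j a = (b : Lˣ) ^ 4 := fun b => b.2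
  have hr2 : f2.range = S := by
    ext g
    obtain ⟨a, rfl⟩ := QuotientGroup.mk'_surjective _ g
    rw [hS]
    constructor
    · rintro ⟨b, hb⟩
      obtain ⟨a', ha'⟩ := hD b
      rw [hf2 b a' ha'] at hb
      obtain ⟨w, ⟨c, rfl⟩, hw⟩ := (QuotientGroup.mk'_eq_mk' _).1 hb
      refine ⟨(b : Lˣ) * algebraMap F L c, ?_⟩
      have := congrArg (fun u : Lˣ => (u : L)) ha'
      simp only [Units.val_pow_eq_pow_val] at this
      rw [mul_pow, ← this, ← hw]
      simp [j]
    · rintro ⟨b, hb⟩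
      have hb0 : b ≠ 0 := by
        rintro rfl
        rw [zero_pow (by norm_num)] at hb
        exact a.ne_zero ((map_eq_zero _).1 hb.symm)
      have h : j a = (Units.mk0 b hb0) ^ 4 := by
        ext; simp [j, hb]
      exact ⟨⟨Units.mk0 b hb0, ⟨a, h⟩⟩, hf2 _ a h⟩
  have hker2 : ∀ b : D, b ∈ f2.ker ↔ (b : Lˣ) ∈ j.range := by
    intro b
    obtain ⟨a, ha⟩ := hD b
    rw [MonoidHom.mem_ker, hf2 b a ha]
    change QuotientGroup.mk a = 1 ↔ _
    rw [QuotientGroup.eq_one_iff]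
    constructor
    · rintro ⟨c, rfl⟩
      rw [powMonoidHom_apply, map_pow] at ha
      have := congrArg (fun u : Lˣ => (u : L)) ha
      simp only [Units.val_pow_eq_pow_val] at this
      obtain ⟨d, hd⟩ := aux_root hζ (Units.ne_zero _) this.symm
      exact ⟨d * c, by ext; simpa [j] using hd.symm⟩
    · rintro ⟨c, hc⟩
      exact ⟨c, hj (by rw [ha, ← hc]; simp)⟩
  have hfix : ∀ (b : D) (τ : L ≃ₐ[F] L), ∃ c : Fˣ, τ ((b : Lˣ) : L) = algebraMap F L c * (b : Lˣ) := by
    intro b τ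
    apply aux_root hζ (Units.ne_zero _)
    obtain ⟨a, ha⟩ := hD b
    have := congrArg (fun u : Lˣ => (u : L)) ha
    simp only [Units.val_pow_eq_pow_val] at this
    rw [← map_pow, ← this]
    simp [j]
  let f1 : D →* ((L ≃ₐ[F] L) →* Lˣ) :=
    { toFun := fun b =>
        { toFun := fun σ => Units.map (σ : L →* L) b / b
          map_one' := by ext; simp
          map_mul' := by
            intro σ τ
            obtain ⟨c, hc⟩ := hfix b τ
            ext
            simp [hc]
            field_simp }
      map_one' := by ext; simp
      map_mul' := by
        intro a b
        ext σ
        simp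
        field_simp }
  have hf1 : ∀ (b : D) σ, ((f1 b σ : Lˣ) : L) = σ (b : Lˣ) / (b : Lˣ) := by
    intro b σ
    simp [f1]
  have hker1 : ∀ b : D, b ∈ f1.ker ↔ (b : Lˣ) ∈ j.range := by
    intro b
    rw [MonoidHom.mem_ker]
    constructor
    · intro h
      have : ∀ σ : L ≃ₐ[F] L, σ ((b : Lˣ) : L) = (b : Lˣ) := by
        intro σ
        have := hf1 b σ
        rw [h] at this
        simp only [MonoidHom.one_apply, Units.val_one] at this
        rw [eq_div_iff (Units.ne_zero _), one_mul] at this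
        exact this.symm
      obtain ⟨c, hc⟩ := (IsGalois.mem_range_algebraMap_iff_fixed ((b : Lˣ) : L)).2 this
      have hc0 : c ≠ 0 := by
        rintro rfl
        rw [map_zero] at hc
        exact Units.ne_zero _ hc.symm
      exact ⟨Units.mk0 c hc0, by ext; simpa [j] using hc⟩
    · rintro ⟨c, hc⟩
      ext σ
      rw [hf1, ← hc]
      simp [j]
  have hsurj : Function.Surjective f1 := by
    intro χ
    have hχ4 : ∀ σ, ((χ σ : Lˣ) : L) ^ 4 = 1 := by
      intro σ
      rw [← Units.val_pow_eq_pow_val, ← map_pow, hexp]; simp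
    have hχ : ∀ σ, ∃ c : Fˣ, ((χ σ : Lˣ) : L) = algebraMap F L c := by
      intro σ
      obtain ⟨c, hc⟩ := aux_root (E := L) hζ one_ne_zero (show ((χ σ : Lˣ) : L) ^ 4 = 1 ^ 4 by rw [hχ4, one_pow])
      exact ⟨c, by simpa using hc⟩
    have hcoc : groupCohomology.IsMulCocycle₁ (fun σ => χ σ) := by
      intro σ τ
      ext
      obtain ⟨c, hc⟩ := hχ τ
      simp [hc, mul_comm]
    obtain ⟨β, hβ⟩ := groupCohomology.isMulCoboundary₁_of_isMulCocycle₁_of_aut_to_units _ hcoc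
    have hβ' : ∀ σ : L ≃ₐ[F] L, σ (β : L) / β = χ σ := by
      intro σ
      have := congrArg (fun u : Lˣ => (u : L)) (hβ σ)
      simpa using this
    have hβF : ∀ σ : L ≃ₐ[F] L, σ ((β : L) ^ 4) = (β : L) ^ 4 := by
      intro σ
      have := hχ4 σ
      rw [← hβ', div_pow, div_eq_one_iff_eq (by simp)] at this
      rw [map_pow, this]
    obtain ⟨c, hc⟩ := (IsGalois.mem_range_algebraMap_iff_fixed _).2 hβF
    have hc0 : c ≠ 0 := by
      rintro rfl
      rw [map_zero] at hc
      exact pow_ne_zero 4 (Units.ne_zero β) hc.symm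
    refine ⟨⟨β, ⟨Units.mk0 c hc0, by ext; simpa [j] using hc⟩⟩, ?_⟩
    ext σ
    rw [hf1]
    exact hβ' σ
  have hk : f1.ker = f2.ker := by
    ext b; rw [hker1, hker2]
  have hc1 := Subgroup.index_ker f1
  have hc2 := Subgroup.index_ker f2
  rw [hr2] at hc2
  rw [MonoidHom.range_eq_top.2 hsurj, Subgroup.card_top] at hc1
  rw [← hc2, ← hk, hc1]
  let : CommGroup (L ≃ₐ[F] L) := { (inferInstance : Group (L ≃ₐ[F] L)) with mul_comm := hcomm }
  have : HasEnoughRootsOfUnity L (Monoid.exponent (L ≃ₐ[F] L)) :=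
    aux_enough hζ (Monoid.exponent_dvd_of_forall_pow_eq_one hexp)
  exact CommGroup.card_monoidHom_of_hasEnoughRootsOfUnity (L ≃ₐ[F] L) L

/-- Kummer subgroup attached to an intermediate field. -/
def auxDelta (F : Type*) [Field F] (L : IntermediateField F (AlgebraicClosure F)) :
    Subgroup (Fˣ ⧸ (powMonoidHom 4 : Fˣ →* Fˣ).range) :=
  Subgroup.map (QuotientGroup.mk' _)
    { carrier := {a : Fˣ | ∃ b : L, b ^ 4 = algebraMap F L a}
      one_mem' := ⟨1, by simp⟩
      mul_mem' := by
        rintro a a' ⟨b, hb⟩ ⟨b', hb'⟩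
        exact ⟨b * b', by simp [mul_pow, hb, hb']⟩
      inv_mem' := by
        rintro a ⟨b, hb⟩
        exact ⟨b⁻¹, by simp [inv_pow, hb]⟩ }

lemma auxDelta_mem {F : Type*} [Field F] (L : IntermediateField F (AlgebraicClosure F)) (a : Fˣ) :
    QuotientGroup.mk' _ a ∈ auxDelta F L ↔ ∃ b : L, b ^ 4 = algebraMap F L a := by
  constructor
  · rintro ⟨a', ⟨b, hb⟩, h⟩
    obtain ⟨w, ⟨c, rfl⟩, hw⟩ := (QuotientGroup.mk'_eq_mk' _).1 h
    exact ⟨b * algebraMap F L c, by rw [mul_pow, hb, ← hw]; simp⟩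
  · rintro h
    exact ⟨a, h, rfl⟩

lemma aux_root_mem {F : Type*} [Field F] {ζ : F} (hζ : IsPrimitiveRoot ζ 4)
    (L : IntermediateField F (AlgebraicClosure F)) (a : Fˣ) (x : AlgebraicClosure F)
    (hx : x ^ 4 = algebraMap F (AlgebraicClosure F) a)
    (ha : QuotientGroup.mk' _ a ∈ auxDelta F L) : x ∈ L := by
  obtain ⟨b, hb⟩ := (auxDelta_mem L a).1 ha
  have hb' : (b : AlgebraicClosure F) ^ 4 = algebraMap F (AlgebraicClosure F) a := by
    have := congrArg (algebraMap L (AlgebraicClosure F)) hb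
    simpa using this
  have hb0 : (b : AlgebraicClosure F) ≠ 0 := by
    intro h
    rw [h, zero_pow (by norm_num)] at hb'
    exact a.ne_zero ((map_eq_zero _).1 hb'.symm)
  obtain ⟨c, hc⟩ := aux_root hζ hb0 (hx.trans hb'.symm)
  rw [hc]
  exact mul_mem (L.algebraMap_mem _) b.2

/-- The Kummer extension attached to a finite subgroup. -/
lemma aux_kummer_ext {F : Type*} [Field F] [CharZero F] {ζ : F} (hζ : IsPrimitiveRoot ζ 4)
    (H : Subgroup (Fˣ ⧸ (powMonoidHom 4 : Fˣ →* Fˣ).range)) [Finite H] :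
    ∃ K : IntermediateField F (AlgebraicClosure F), FiniteDimensional F K ∧ IsGalois F K ∧
      (∀ σ τ : K ≃ₐ[F] K, σ * τ = τ * σ) ∧ Nat.card (K ≃ₐ[F] K) = Nat.card H ∧
      auxDelta F K = H ∧
      ∀ L : IntermediateField F (AlgebraicClosure F), H ≤ auxDelta F L → K ≤ L := by
  set Ω := AlgebraicClosure F
  have hlift : ∀ h : H, ∃ a : Fˣ, QuotientGroup.mk' _ a = (h : _ ⧸ (powMonoidHom 4 : Fˣ →* Fˣ).range) :=
    fun h => QuotientGroup.mk'_surjective _ _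
  choose a ha using hlift
  have hroot : ∀ h : H, ∃ b : Ω, b ^ 4 = algebraMap F Ω (a h) := fun h =>
    IsAlgClosed.exists_pow_nat_eq _ (by norm_num)
  choose b hb using hroot
  have hb0 : ∀ h, b h ≠ 0 := by
    intro h h0
    have := hb h
    rw [h0, zero_pow (by norm_num)] at this
    exact (a h).ne_zero ((map_eq_zero _).1 this.symm)
  let K : IntermediateField F Ω := IntermediateField.adjoin F (Set.range b)
  have hbK : ∀ h, b h ∈ K := fun h => IntermediateField.subset_adjoin _ _ ⟨h, rfl⟩
  have hfd : FiniteDimensional F K := by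
    have : Finite (Set.range b) := Set.finite_range b
    exact IntermediateField.finiteDimensional_adjoin fun x _ => Algebra.IsIntegral.isIntegral x
  have hnorm : Normal F K := by
    rw [IntermediateField.normal_iff_forall_map_le]
    intro σ
    rw [IntermediateField.adjoin_map, IntermediateField.adjoin_le_iff]
    rintro _ ⟨_, ⟨h, rfl⟩, rfl⟩
    obtain ⟨c, hc⟩ := aux_root (x := σ (b h)) hζ (hb0 h) (by
      rw [← map_pow, hb]; simp)
    change σ (b h) ∈ K
    rw [hc]
    exact mul_mem (K.algebraMap_mem _) (hbK h)
  have hgal : IsGalois F K := ⟨⟩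
  let β : H → Kˣ := fun h => Units.mk0 ⟨b h, hbK h⟩ (fun h0 => hb0 h (congrArg Subtype.val h0))
  have hβ4 : ∀ h, ((β h : Kˣ) : K) ^ 4 = algebraMap F K (a h) := by
    intro h
    apply Subtype.ext
    exact hb h
  have hσ : ∀ h (σ : K ≃ₐ[F] K), ∃ c : Fˣ, σ (β h : K) = algebraMap F K c * (β h : K) := by
    intro h σ
    apply aux_root hζ (Units.ne_zero _)
    rw [← map_pow, hβ4]; simp
  have hmul : ∀ h h', ∃ c : Fˣ, ((β (h * h') : Kˣ) : K) = algebraMap F K c * ((β h : K) * β h') := by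
    intro h h'
    have : QuotientGroup.mk' (powMonoidHom 4 : Fˣ →* Fˣ).range (a h * a h') = QuotientGroup.mk' _ (a (h * h')) := by
      rw [map_mul, ha, ha, ha]; rfl
    obtain ⟨w, ⟨c, rfl⟩, hw⟩ := (QuotientGroup.mk'_eq_mk' _).1 this
    obtain ⟨d, hd⟩ := aux_root (E := K) (x := ((β (h * h') : Kˣ) : K))
      (y := algebraMap F K c * ((β h : K) * β h')) hζ (by simp) (by
        rw [mul_pow, mul_pow, hβ4, hβ4, hβ4, ← hw]; simp; ring)
    exact ⟨d * c, by rw [hd]; simp; ring⟩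
  let χ : (K ≃ₐ[F] K) →* (H →* Kˣ) :=
    { toFun := fun σ => MonoidHom.mk' (fun h => Units.map (σ : K →* K) (β h) / β h) (by
        intro h h'
        obtain ⟨c, hc⟩ := hmul h h'
        ext1
        simp [hc]
        field_simp)
      map_one' := by ext; simp
      map_mul' := by
        intro σ τ
        ext1 h
        obtain ⟨c, hc⟩ := hσ h τ
        ext1
        simp [hc]
        field_simp }
  have hχ : ∀ σ h, ((χ σ h : Kˣ) : K) = σ (β h) / β h := by
    intro σ h; simp [χ]
  have hinj : Function.Injective χ := by
    intro σ τ h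
    have h1 : (σ : K →ₐ[F] K) = (τ : K →ₐ[F] K) := by
      apply IntermediateField.adjoin_algHom_ext
      rintro _ ⟨x, rfl⟩
      have h2 : ((χ σ x : Kˣ) : K) = (χ τ x : Kˣ) := by rw [h]
      rw [hχ, hχ, div_left_inj' (Units.ne_zero _)] at h2
      exact h2
    ext1 x
    exact congrArg (fun f : K →ₐ[F] K => f x) h1
  have hH4 : ∀ h : H, h ^ 4 = 1 := by
    rintro ⟨g, hg⟩
    apply Subtype.ext
    obtain ⟨y, rfl⟩ := QuotientGroup.mk'_surjective _ g
    change (QuotientGroup.mk' _ y) ^ 4 = 1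
    rw [← map_pow]
    exact (QuotientGroup.eq_one_iff _).2 ⟨y, rfl⟩
  have hcomm : ∀ σ τ : K ≃ₐ[F] K, σ * τ = τ * σ := by
    intro σ τ
    apply hinj
    rw [map_mul, map_mul]
    ext1 h
    rw [MonoidHom.mul_apply, MonoidHom.mul_apply, mul_comm]
  have hexp : ∀ σ : K ≃ₐ[F] K, σ ^ 4 = 1 := by
    intro σ
    apply hinj
    ext1 h
    rw [map_pow, MonoidHom.pow_apply, ← map_pow, hH4]; simp
  have : HasEnoughRootsOfUnity K (Monoid.exponent H) :=
    aux_enough hζ (Monoid.exponent_dvd_of_forall_pow_eq_one hH4)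
  have hcH := CommGroup.card_monoidHom_of_hasEnoughRootsOfUnity H K
  have hfin : Finite (H →* Kˣ) := Nat.finite_of_card_ne_zero (by rw [hcH]; exact Nat.card_pos.ne')
  have hle : Nat.card (K ≃ₐ[F] K) ≤ Nat.card H := by
    rw [← hcH]
    exact Nat.card_le_card_of_injective χ hinj
  have hcard := aux_kummer_card hζ hcomm hexp (auxDelta F K) (auxDelta_mem K)
  have hHle : H ≤ auxDelta F K := by
    intro g hg
    have h1 := (auxDelta_mem K (a ⟨g, hg⟩)).2 ⟨_, hβ4 ⟨g, hg⟩⟩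
    rw [ha] at h1
    exact h1
  have hfin2 : Finite (auxDelta F K) :=
    Nat.finite_of_card_ne_zero (by rw [hcard]; exact Nat.card_pos.ne')
  have heq : H = auxDelta F K := Subgroup.eq_of_le_of_card_ge hHle (hcard.trans_le hle)
  refine ⟨K, hfd, hgal, hcomm, ?_, heq.symm, ?_⟩
  · rw [← hcard, ← heq]
  · intro L hL
    rw [IntermediateField.adjoin_le_iff]
    rintro _ ⟨h, rfl⟩
    exact aux_root_mem hζ L (a h) (b h) (hb h) (by rw [ha]; exact hL h.2)

lemma aux_card_congr {α β : Type*} (P : α → Prop) (Q : β → Prop) (f : α → β)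
    (h : ∀ x, P x → Q (f x)) (inj : ∀ x y, P x → P y → f x = f y → x = y)
    (surj : ∀ y, Q y → ∃ x, P x ∧ f x = y) : Nat.card {x // P x} = Nat.card {y // Q y} := by
  refine Nat.card_congr (Equiv.ofBijective (fun x => ⟨f x.1, h x.1 x.2⟩) ⟨?_, ?_⟩)
  · rintro ⟨x, hx⟩ ⟨y, hy⟩ e
    exact Subtype.ext (inj x y hx hy (congrArg Subtype.val e))
  · rintro ⟨y, hy⟩
    obtain ⟨x, hx, e⟩ := surj y hy
    exact ⟨⟨x, hx⟩, Subtype.ext e⟩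

lemma aux_kummer_bij (F : Type*) [Field F] [CharZero F] {ζ : F} (hζ : IsPrimitiveRoot ζ 4) :
    Nat.card {L : IntermediateField F (AlgebraicClosure F) //
        Module.finrank F L = 4 ∧ IsGalois F L ∧ ∀ σ τ : L ≃ₐ[F] L, σ * τ = τ * σ} =
    Nat.card {H : Subgroup (Fˣ ⧸ (powMonoidHom 4 : Fˣ →* Fˣ).range) // Nat.card H = 4} := by
  have key : ∀ L : IntermediateField F (AlgebraicClosure F), Module.finrank F L = 4 →
      IsGalois F L → (∀ σ τ : L ≃ₐ[F] L, σ * τ = τ * σ) → Nat.card (auxDelta F L) = 4 := by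
    intro L h1 h2 h3
    have : FiniteDimensional F L := Module.finite_of_finrank_pos (by omega)
    have hc : Nat.card (L ≃ₐ[F] L) = 4 := by rw [IsGalois.card_aut_eq_finrank, h1]
    rw [aux_kummer_card hζ h3 (fun σ => by rw [← hc]; exact pow_card_eq_one') _ (auxDelta_mem L), hc]
  have surj : ∀ H : Subgroup (Fˣ ⧸ (powMonoidHom 4 : Fˣ →* Fˣ).range), Nat.card H = 4 →
      ∃ K : IntermediateField F (AlgebraicClosure F), (Module.finrank F K = 4 ∧ IsGalois F K ∧
        ∀ σ τ : K ≃ₐ[F] K, σ * τ = τ * σ) ∧ auxDelta F K = H := by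
    intro H hH
    have : Finite H := Nat.finite_of_card_ne_zero (by omega)
    have hex := aux_kummer_ext hζ H
    obtain ⟨K, hK, hKG, hcomm, hKc, hKH, _⟩ := hex
    refine ⟨K, ⟨?_, hKG, hcomm⟩, hKH⟩
    rw [← IsGalois.card_aut_eq_finrank, hKc, hH]
  have inj : ∀ L L' : IntermediateField F (AlgebraicClosure F),
      (Module.finrank F L = 4 ∧ IsGalois F L ∧ ∀ σ τ : L ≃ₐ[F] L, σ * τ = τ * σ) →
      (Module.finrank F L' = 4 ∧ IsGalois F L' ∧ ∀ σ τ : L' ≃ₐ[F] L', σ * τ = τ * σ) →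
      auxDelta F L = auxDelta F L' → L = L' := by
    have rec_ : ∀ L : IntermediateField F (AlgebraicClosure F), Module.finrank F L = 4 →
      IsGalois F L → (∀ σ τ : L ≃ₐ[F] L, σ * τ = τ * σ) →
      ∀ K : IntermediateField F (AlgebraicClosure F), FiniteDimensional F K → IsGalois F K →
        Nat.card (K ≃ₐ[F] K) = 4 → K ≤ L → K = L := by
      intro L h1 h2 h3 K hK hKG hc hle
      have : FiniteDimensional F L := Module.finite_of_finrank_pos (by omega)
      apply IntermediateField.eq_of_le_of_finrank_eq hle
      rw [h1, ← hc, IsGalois.card_aut_eq_finrank]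
    rintro L L' ⟨h1, h2, h3⟩ ⟨h1', h2', h3'⟩ h
    have hc := key L h1 h2 h3
    have : Finite (auxDelta F L) := Nat.finite_of_card_ne_zero (by omega)
    obtain ⟨K, hK, hKG, -, hKc, -, hmin⟩ := aux_kummer_ext hζ (auxDelta F L)
    rw [hc] at hKc
    refine (rec_ L h1 h2 h3 K hK hKG hKc (hmin L le_rfl)).symm.trans ?_
    exact rec_ L' h1' h2' h3' K hK hKG hKc (hmin L' h.le)
  have key' := fun (L : IntermediateField F (AlgebraicClosure F)) (hL : Module.finrank F L = 4 ∧ IsGalois F L ∧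
    ∀ σ τ : L ≃ₐ[F] L, σ * τ = τ * σ) => key L hL.1 hL.2.1 hL.2.2
  exact aux_card_congr _ _ _ key' inj surj

section
open Classical in
lemma aux_residue (F : Type*) [Field F] [Algebra ℚ_[2] F] [FiniteDimensional ℚ_[2] F]
    (m : ℕ) (hm : Module.finrank ℚ_[2] F = m) (n : ℕ) :
    ∃ π : F → (Fin m → ZMod (2 ^ n)),
      (∀ x y, spectralNorm ℚ_[2] F x ≤ 1 → spectralNorm ℚ_[2] F y ≤ 1 → π (x + y) = π x + π y) ∧
      (∀ v, ∃ x, spectralNorm ℚ_[2] F x ≤ 1 ∧ π x = v) ∧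
      (∀ x, spectralNorm ℚ_[2] F x ≤ 1 → (π x = 0 ↔ spectralNorm ℚ_[2] F x ≤ (1 / 2) ^ n)) := by
  letI : Algebra ℤ_[2] F := ((algebraMap ℚ_[2] F).comp (algebraMap ℤ_[2] ℚ_[2])).toAlgebra
  haveI : IsScalarTower ℤ_[2] ℚ_[2] F := IsScalarTower.of_algebraMap_eq (fun _ => rfl)
  haveI : CharZero F := charZero_of_injective_algebraMap (algebraMap ℚ_[2] F).injective
  have hintcl : ∀ x : F, x ∈ integralClosure ℤ_[2] F ↔ spectralNorm ℚ_[2] F x ≤ 1 := by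
    intro x
    have hxi : IsIntegral ℚ_[2] x := Algebra.IsIntegral.isIntegral x
    rw [spectralNorm, spectralValue_le_one_iff (minpoly.monic hxi), mem_integralClosure_iff]
    constructor
    · intro hx k
      rw [minpoly.isIntegrallyClosed_eq_field_fractions' ℚ_[2] hx, Polynomial.coeff_map]
      exact PadicInt.norm_le_one _
    · intro h
      have hl : minpoly ℚ_[2] x ∈ Polynomial.lifts (algebraMap ℤ_[2] ℚ_[2]) := by
        rw [Polynomial.lifts_iff_coeff_lifts]
        intro k
        exact ⟨⟨_, h k⟩, rfl⟩
      obtain ⟨p, hp, -, hpm⟩ := Polynomial.lifts_and_degree_eq_and_monic hl (minpoly.monic hxi)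
      refine ⟨p, hpm, ?_⟩
      rw [IsScalarTower.algebraMap_eq ℤ_[2] ℚ_[2] F, ← Polynomial.eval₂_map, hp]
      exact minpoly.aeval _ _
  haveI : Module.IsTorsionFree ℤ_[2] F := Module.IsTorsionFree.trans_faithfulSMul ℤ_[2] ℚ_[2] F
  set O := integralClosure ℤ_[2] F with hO
  haveI : Module.Free ℤ_[2] O := IsIntegralClosure.module_free ℤ_[2] ℚ_[2] F O
  haveI : Module.Finite ℤ_[2] O := IsIntegralClosure.finite ℤ_[2] ℚ_[2] F O
  have hr : Module.finrank ℤ_[2] O = m := by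
    rw [IsIntegralClosure.rank ℤ_[2] ℚ_[2] F O, hm]
  let e : O ≃ₗ[ℤ_[2]] (Fin m → ℤ_[2]) := (Module.finBasisOfFinrankEq ℤ_[2] O hr).equivFun
  let π : F → (Fin m → ZMod (2 ^ n)) := fun x =>
    if h : x ∈ O then fun i => PadicInt.toZModPow n (e ⟨x, h⟩ i) else 0
  have hπ : ∀ x (h : x ∈ O), π x = fun i => PadicInt.toZModPow n (e ⟨x, h⟩ i) := by
    intro x h
    simp only [π, dif_pos h]
  have hnormp : ∀ x : F, spectralNorm ℚ_[2] F (2 ^ n * x) = (1 / 2) ^ n * spectralNorm ℚ_[2] F x := by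
    intro x
    have h1 := spectralAlgNorm_mul (K := ℚ_[2]) (L := F) (2 ^ n) x
    rw [spectralAlgNorm_def, spectralAlgNorm_def, spectralAlgNorm_def] at h1
    rw [h1]
    congr 1
    have h2 : (2 ^ n : F) = algebraMap ℚ_[2] F (2 ^ n) := by rw [map_pow, map_ofNat]
    rw [h2, spectralNorm_extends, norm_pow]
    congr 1
    have := Padic.norm_p (p := 2)
    simpa using this
  have hmap : algebraMap ℤ_[2] F (2 ^ n) = 2 ^ n := by rw [map_pow, map_ofNat]
  refine ⟨π, ?_, ?_, ?_⟩
  · intro x y hx hy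
    rw [← hintcl] at hx hy
    rw [hπ x hx, hπ y hy, hπ (x + y) (add_mem hx hy)]
    ext i
    rw [Pi.add_apply, ← map_add, ← Pi.add_apply, ← map_add]
    rfl
  · intro v
    have hs := fun i => ZMod.ringHom_surjective (PadicInt.toZModPow (p := 2) n) (v i)
    choose w hw using hs
    refine ⟨(e.symm w : O), (hintcl _).1 (e.symm w).2, ?_⟩
    rw [hπ _ (e.symm w).2]
    ext i
    simp [hw]
  · intro x hx
    rw [← hintcl] at hx
    rw [hπ x hx]
    have hk : ∀ z : ℤ_[2], PadicInt.toZModPow n z = 0 ↔ ∃ w, z = 2 ^ n * w := by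
      intro z
      rw [← RingHom.mem_ker, PadicInt.ker_toZModPow, Ideal.mem_span_singleton]
      rfl
    constructor
    · intro h
      have h' : ∀ i, ∃ w, e ⟨x, hx⟩ i = 2 ^ n * w := fun i => (hk _).1 (congrFun h i)
      choose w hw using h'
      have h3 : e ⟨x, hx⟩ = (2 ^ n : ℤ_[2]) • w := by
        ext i; rw [hw]; rfl
      have h4 : (⟨x, hx⟩ : O) = (2 ^ n : ℤ_[2]) • e.symm w := by
        apply e.injective
        rw [h3, map_smul, LinearEquiv.apply_symm_apply]
      have h5 : x = 2 ^ n * (e.symm w : O) := by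
        have := congrArg Subtype.val h4
        rw [Subalgebra.coe_smul, Algebra.smul_def, hmap] at this
        exact this
      rw [h5, hnormp]
      exact mul_le_of_le_one_right (by positivity) ((hintcl _).1 (e.symm w).2)
    · intro h
      have h20 : (2 ^ n : F) ≠ 0 := pow_ne_zero _ two_ne_zero
      have h6 : x = 2 ^ n * (x / 2 ^ n) := by field_simp
      have h7 : x / 2 ^ n ∈ O := by
        rw [hintcl]
        rw [h6, hnormp] at h
        exact le_of_mul_le_mul_left (by simpa using h) (show (0:ℝ) < (1 / 2) ^ n by positivity)
      have h4 : (⟨x, hx⟩ : O) = (2 ^ n : ℤ_[2]) • ⟨x / 2 ^ n, h7⟩ := by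
        apply Subtype.ext
        rw [Subalgebra.coe_smul, Algebra.smul_def, hmap]
        exact h6
      ext i
      change PadicInt.toZModPow n _ = 0
      rw [hk, h4, map_smul]
      exact ⟨_, rfl⟩
end

lemma aux_sqrt {F : Type*} [NormedField F] [CompleteSpace F]
    (ultra : ∀ x y : F, ‖x + y‖ ≤ max ‖x‖ ‖y‖) (h2 : ‖(2 : F)‖ = 1 / 2)
    (y : F) (hy : ‖y‖ ≤ 1) : ∃ x : F, ‖x‖ ≤ 1 ∧ x + 2 * x ^ 2 = y := by
  let f : F → F := fun x => y - 2 * x ^ 2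
  let s : Set F := Metric.closedBall 0 1
  have hs : ∀ x, x ∈ s ↔ ‖x‖ ≤ 1 := fun x => by simp [s]
  have hmaps : Set.MapsTo f s s := by
    intro x hx
    rw [hs] at hx ⊢
    simp only [f, sub_eq_add_neg]
    refine (ultra _ _).trans (max_le hy ?_)
    rw [norm_neg, norm_mul, norm_pow, h2]
    have : ‖x‖ ^ 2 ≤ 1 := pow_le_one₀ (norm_nonneg _) hx
    linarith
  have hcon : ContractingWith (1 / 2) (hmaps.restrict f s s) := by
    refine ⟨by rw [div_lt_one (by norm_num)]; norm_num, LipschitzWith.of_dist_le_mul ?_⟩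
    rintro ⟨a, ha⟩ ⟨b, hb⟩
    rw [hs] at ha hb
    rw [Subtype.dist_eq, Subtype.dist_eq]
    simp only [Set.MapsTo.val_restrict_apply, dist_eq_norm, f]
    have e : y - 2 * a ^ 2 - (y - 2 * b ^ 2) = -(2 * ((a + b) * (a - b))) := by ring
    rw [e, norm_neg, norm_mul, norm_mul, h2]
    have h3 : ‖a + b‖ ≤ 1 := (ultra _ _).trans (max_le ha hb)
    have h4 := mul_le_mul_of_nonneg_right h3 (norm_nonneg (a - b))
    push_cast
    linarith
  obtain ⟨x, hx, hfx, -⟩ := hcon.exists_fixedPoint' (Metric.isClosed_closedBall.isComplete) hmaps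
    (x := 0) (by simp [s]) (edist_ne_top _ _)
  refine ⟨x, (hs x).1 hx, ?_⟩
  have h5 : y - 2 * x ^ 2 = x := hfx
  linear_combination (-1 : F) * h5

lemma aux_local {F : Type*} [NormedField F] [CompleteSpace F]
    (ultra : ∀ x y : F, ‖x + y‖ ≤ max ‖x‖ ‖y‖) (h2 : ‖(2 : F)‖ = 1 / 2) (m : ℕ)
    (hres : ∀ n : ℕ, ∃ π : F → (Fin m → ZMod (2 ^ n)),
      (∀ x y, ‖x‖ ≤ 1 → ‖y‖ ≤ 1 → π (x + y) = π x + π y) ∧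
      (∀ v, ∃ x, ‖x‖ ≤ 1 ∧ π x = v) ∧
      (∀ x, ‖x‖ ≤ 1 → (π x = 0 ↔ ‖x‖ ≤ (1 / 2) ^ n))) :
    (powMonoidHom 2 : Fˣ →* Fˣ).range.index = 2 ^ (m + 2) := by
  have h20 : (2 : F) ≠ 0 := by
    intro h; rw [h] at h2; simp at h2
  have h40 : (4 : F) ≠ 0 := by
    have : (4 : F) = 2 * 2 := by norm_num
    rw [this]; exact mul_ne_zero h20 h20
  have h4 : ‖(4 : F)‖ = 1 / 4 := by
    have : (4 : F) = 2 * 2 := by norm_num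
    rw [this, norm_mul, h2]; norm_num
  have hπneg : ∀ n, ∀ π : F → (Fin m → ZMod (2 ^ n)),
      (∀ x y, ‖x‖ ≤ 1 → ‖y‖ ≤ 1 → π (x + y) = π x + π y) →
      ∀ x y, ‖x‖ ≤ 1 → ‖y‖ ≤ 1 → π x = π y → π (x - y) = 0 := by
    intro n π h x y hx hy hxy
    have h1 : ‖x - y‖ ≤ 1 := by
      rw [sub_eq_add_neg]
      exact (ultra _ _).trans (max_le hx (by rwa [norm_neg]))
    have := h (x - y) y h1 hy
    rw [sub_add_cancel, hxy] at this
    simpa using this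
  have hU1 : ∀ u : F, ‖u - 1‖ ≤ 1 / 4 → ‖u‖ = 1 := by
    intro u hu
    apply le_antisymm
    · have := ultra (u - 1) 1
      rw [sub_add_cancel] at this
      exact this.trans (max_le (by linarith) (by simp))
    · have := ultra u (-(u - 1))
      rw [norm_neg, show u + -(u - 1) = 1 by ring, norm_one] at this
      rcases le_max_iff.1 this with h | h
      · exact h
      · linarith
  let U : Subgroup Fˣ :=
    { carrier := {u | ‖(u : F) - 1‖ ≤ 1 / 4}
      one_mem' := by simp
      mul_mem' := by
        intro a b ha hb
        change ‖((a * b : Fˣ) : F) - 1‖ ≤ 1 / 4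
        rw [Units.val_mul, show (a : F) * b - 1 = a * (b - 1) + (a - 1) by ring]
        refine (ultra _ _).trans (max_le ?_ ha)
        rw [norm_mul, hU1 a ha, one_mul]; exact hb
      inv_mem' := by
        intro a ha
        change ‖((a⁻¹ : Fˣ) : F) - 1‖ ≤ 1 / 4
        have : ((a⁻¹ : Fˣ) : F) - 1 = -(a⁻¹ : Fˣ) * (a - 1) := by
          rw [mul_sub, neg_mul, Units.inv_mul]; ring
        rw [this, norm_mul, norm_neg, Units.val_inv_eq_inv_val, norm_inv, hU1 a ha, inv_one,
          one_mul]
        exact ha }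
  have hU : ∀ u : Fˣ, u ∈ U ↔ ‖(u : F) - 1‖ ≤ 1 / 4 := fun u => Iff.rfl
  let two : Fˣ := Units.mk0 2 h20
  let f : Multiplicative ℤ × U →* Fˣ := (zpowersHom Fˣ two).coprod U.subtype
  have hf : ∀ n u, f (n, u) = two ^ (Multiplicative.toAdd n) * (u : Fˣ) := by
    intro n u; simp [f]
  have htwo : ∀ n : ℤ, ‖((two ^ n : Fˣ) : F)‖ = (1 / 2) ^ n := by
    intro n
    simp [two, norm_zpow, h2]
  have hnf : ∀ n u, ‖((f (n, u) : Fˣ) : F)‖ = (1 / 2) ^ (Multiplicative.toAdd n) := by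
    intro n u
    rw [hf, Units.val_mul, norm_mul, htwo, hU1 _ u.2, mul_one]
  have hzero : ∀ n u, ‖((f (n, u) : Fˣ) : F)‖ = 1 → n = 1 := by
    intro n u h
    rw [hnf] at h
    have := (zpow_eq_one_iff_right₀ (by norm_num : (0:ℝ) ≤ 1 / 2) (by norm_num)).1 h
    exact Multiplicative.toAdd.injective this
  have hinj : Function.Injective f := by
    rw [injective_iff_map_eq_one]
    rintro ⟨n, u⟩ h
    have hn := hzero n u (by rw [h]; simp)
    subst hn
    rw [hf] at h
    simp at h
    rw [h]; rfl
  have hm1 : (-1 : Fˣ) ∉ f.range := by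
    rintro ⟨⟨n, u⟩, h⟩
    have hn := hzero n u (by rw [h]; simp)
    subst hn
    rw [hf] at h
    simp at h
    have := u.2
    rw [hU, h] at this
    rw [show ((-1 : Fˣ) : F) - 1 = -2 by push_cast; ring, norm_neg, h2] at this
    norm_num at this
  have hsq : ∀ x : Fˣ, x ^ 2 = 1 ↔ x = 1 ∨ x = -1 := by
    intro x
    constructor
    · intro h
      have h' : (x : F) ^ 2 = 1 := by
        have := congrArg Units.val h
        simpa using this
      rcases (mul_self_eq_one_iff (a := (x : F))).1 ((sq _).symm.trans h') with h | h
      · left; exact Units.ext h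
      · right; exact Units.ext (by simpa using h)
    · rintro (rfl | rfl) <;> simp
  have hfi : f.range.index ≠ 0 := by
    obtain ⟨π, hadd, -, hker⟩ := hres 3
    have hsc : ∀ x : Fˣ, ∃ n : ℤ, ‖((two ^ n * x : Fˣ) : F)‖ ≤ 1 ∧
        1 / 2 < ‖((two ^ n * x : Fˣ) : F)‖ := by
      intro x
      obtain ⟨n, hn1, hn2⟩ := exists_mem_Ioc_zpow (x := ‖(x : F)‖) (y := 2) (by simp) (by norm_num)
      refine ⟨n + 1, ?_, ?_⟩
      · rw [Units.val_mul, norm_mul, htwo, one_div, inv_zpow, inv_mul_le_iff₀ (by positivity)]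
        simpa using hn2
      · rw [Units.val_mul, norm_mul, htwo, one_div, inv_zpow, lt_inv_mul_iff₀ (by positivity),
          zpow_add₀ (by norm_num)]
        simpa using hn1
    choose ν hν1 hν2 using hsc
    have hfinite : Finite (Fˣ ⧸ f.range) := by
      refine Finite.of_injective (β := Fin m → ZMod (2 ^ 3))
        (fun g => π ((two ^ ν g.out * g.out : Fˣ) : F)) ?_
      intro g g' h
      set a := two ^ ν g.out * g.out with ha
      set b := two ^ ν g'.out * g'.out with hb
      have hd := hπneg 3 π hadd a b (hν1 _) (hν1 _) h
      have hab : ‖(a : F) - b‖ ≤ 1 := by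
        rw [sub_eq_add_neg]
        exact (ultra _ _).trans (max_le (hν1 _) (by rw [norm_neg]; exact hν1 _))
      rw [hker _ hab] at hd
      have hu : a⁻¹ * b ∈ U := by
        rw [hU]
        have e : ((a⁻¹ * b : Fˣ) : F) - 1 = -((a : F)⁻¹ * (a - b)) := by
          rw [mul_sub, inv_mul_cancel₀ (Units.ne_zero _)]
          simp
        rw [e, norm_neg, norm_mul, norm_inv, inv_mul_le_iff₀ (by simp)]
        have h3 : 1 / 2 < ‖(a : F)‖ := hν2 _
        refine hd.trans ?_
        norm_num
        linarith
      rw [← QuotientGroup.out_eq' g, ← QuotientGroup.out_eq' g', QuotientGroup.eq]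
      refine ⟨(Multiplicative.ofAdd (ν g.out - ν g'.out), ⟨a⁻¹ * b, hu⟩), ?_⟩
      rw [hf]
      change two ^ (ν g.out - ν g'.out) * (a⁻¹ * b) = _
      rw [ha, hb]
      simp only [toAdd_ofAdd, zpow_sub, mul_inv_rev]
      rw [show two ^ ν g.out * (two ^ ν g'.out)⁻¹ * (g.out⁻¹ * (two ^ ν g.out)⁻¹ *
        (two ^ ν g'.out * g'.out)) = (two ^ ν g.out * (two ^ ν g.out)⁻¹) *
        ((two ^ ν g'.out)⁻¹ * two ^ ν g'.out) * (g.out⁻¹ * g'.out) by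
          simp only [mul_assoc, mul_comm, mul_left_comm]]
      simp
    exact Subgroup.index_ne_zero_of_finite
  rw [aux_snake f hinj hfi (-1) hsq hm1]
  obtain ⟨π, hadd, hsurj, hker⟩ := hres 1
  have hb1 : ∀ u : U, ‖(((u : Fˣ) : F) - 1) / 4‖ ≤ 1 := by
    intro u
    have := u.2
    rw [hU] at this
    rw [norm_div, h4]
    linarith
  let θ : U →* Multiplicative (Fin m → ZMod (2 ^ 1)) := MonoidHom.mk'
    (fun u => Multiplicative.ofAdd (π ((((u : Fˣ) : F) - 1) / 4))) (by
      intro u v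
      rw [← ofAdd_add]
      congr 1
      set a := (((u : Fˣ) : F) - 1) / 4 with ha
      set b := (((v : Fˣ) : F) - 1) / 4 with hb
      have e : (((u * v : U) : Fˣ) : F) - 1 = 4 * (a + b + 4 * (a * b)) := by
        rw [ha, hb, Subgroup.coe_mul, Units.val_mul]
        field_simp
        ring
      rw [e, mul_div_cancel_left₀ _ h40]
      have hab : ‖a * b‖ ≤ 1 := by
        rw [norm_mul]; exact mul_le_one₀ (hb1 u) (norm_nonneg _) (hb1 v)
      have h4ab : ‖4 * (a * b)‖ ≤ 1 / 4 := by rw [norm_mul, h4]; linarith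
      rw [hadd _ _ ((ultra _ _).trans (max_le (hb1 u) (hb1 v))) (by linarith),
        hadd _ _ (hb1 u) (hb1 v), (hker (4 * (a * b)) (by linarith)).2 (by norm_num at h4ab ⊢; linarith), add_zero])
  have hθ : ∀ u : U, θ u = Multiplicative.ofAdd (π ((((u : Fˣ) : F) - 1) / 4)) := fun u => rfl
  have hθs : Function.Surjective θ := by
    intro v
    obtain ⟨x, hx, hxv⟩ := hsurj (Multiplicative.toAdd v)
    have h4x : ‖(1 + 4 * x) - 1‖ ≤ 1 / 4 := by
      rw [add_sub_cancel_left, norm_mul, h4]; linarith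
    have hne : 1 + 4 * x ≠ 0 := by
      intro h
      have := hU1 _ h4x
      rw [h] at this; simp at this
    refine ⟨⟨Units.mk0 _ hne, h4x⟩, ?_⟩
    rw [hθ]
    simp only [Units.val_mk0, add_sub_cancel_left, mul_div_cancel_left₀ _ h40]
    rw [hxv]; rfl
  let ψ : Multiplicative ℤ →* Multiplicative (ZMod 2) :=
    AddMonoidHom.toMultiplicative (Int.castAddHom (ZMod 2))
  have hψs : Function.Surjective ψ := by
    intro v
    obtain ⟨k, hk⟩ := ZMod.intCast_surjective (Multiplicative.toAdd v)
    exact ⟨Multiplicative.ofAdd k, congrArg Multiplicative.ofAdd hk⟩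
  have hkereq : (powMonoidHom 2 : Multiplicative ℤ × U →* Multiplicative ℤ × U).range =
      (ψ.prodMap θ).ker := by
    ext ⟨k, u⟩
    rw [MonoidHom.mem_ker]
    constructor
    · rintro ⟨⟨l, v⟩, h⟩
      rw [← h, powMonoidHom_apply, map_pow]
      ext1
      · change (ψ l) ^ 2 = 1
        have : ∀ x : Multiplicative (ZMod 2), x ^ 2 = 1 := by decide
        exact this _
      · change (θ v) ^ 2 = 1
        have : ∀ x : Multiplicative (Fin m → ZMod (2 ^ 1)), x ^ 2 = 1 := by
          intro x
          apply Multiplicative.toAdd.injective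
          rw [toAdd_pow]
          ext i
          have h0 : ∀ z : ZMod (2 ^ 1), 2 • z = 0 := by decide
          exact h0 _
        exact this _
    · intro h
      have hk : ψ k = 1 := congrArg Prod.fst h
      have hu : θ u = 1 := congrArg Prod.snd h
      have hk2 : ((Multiplicative.toAdd k : ℤ) : ZMod 2) = 0 := congrArg Multiplicative.toAdd hk
      rw [ZMod.intCast_zmod_eq_zero_iff_dvd] at hk2 
      obtain ⟨l, hl⟩ := hk2
      have hu2 : π ((((u : Fˣ) : F) - 1) / 4) = 0 := congrArg Multiplicative.toAdd hu
      rw [hker _ (hb1 u), norm_div, h4] at hu2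
      obtain ⟨x, hx, hxy⟩ := aux_sqrt ultra h2 ((((u : Fˣ) : F) - 1) / (4 * 2)) (by
        rw [norm_div, norm_mul, h4, h2]; norm_num at hu2 ⊢; linarith)
      have h4x : ‖(1 + 4 * x) - 1‖ ≤ 1 / 4 := by
        rw [add_sub_cancel_left, norm_mul, h4]; linarith
      have hne : 1 + 4 * x ≠ 0 := by
        intro h
        have := hU1 _ h4x
        rw [h] at this; simp at this
      refine ⟨(Multiplicative.ofAdd l, ⟨Units.mk0 _ hne, h4x⟩), ?_⟩
      rw [powMonoidHom_apply]
      ext1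
      · apply Multiplicative.toAdd.injective
        change (2 : ℕ) • l = _
        rw [hl]; simp
      · apply Subtype.ext
        apply Units.ext
        change (1 + 4 * x) ^ 2 = ((u : Fˣ) : F)
        rw [eq_div_iff (mul_ne_zero h40 h20)] at hxy
        linear_combination hxy
  have hs : Function.Surjective (ψ.prodMap θ) := hψs.prodMap hθs
  rw [hkereq, Subgroup.index_ker, MonoidHom.range_eq_top.2 hs, Subgroup.card_top, Nat.card_prod]
  have c1 : Nat.card (Multiplicative (ZMod 2)) = 2 := by simp [Nat.card_eq_fintype_card]
  have c2 : Nat.card (Multiplicative (Fin m → ZMod (2 ^ 1))) = 2 ^ m := by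
    simp [Nat.card_eq_fintype_card]
  rw [c1, c2]
  ring

lemma aux_index (F : Type*) [Field F] [Algebra ℚ_[2] F] [FiniteDimensional ℚ_[2] F]
    (m : ℕ) (hm : Module.finrank ℚ_[2] F = m) :
    (powMonoidHom 2 : Fˣ →* Fˣ).range.index = 2 ^ (m + 2) := by
  have h2 : spectralNorm ℚ_[2] F 2 = 1 / 2 := by
    have e : (2 : F) = algebraMap ℚ_[2] F 2 := by rw [map_ofNat]
    rw [e, spectralNorm_extends]
    have := Padic.norm_p (p := 2)
    simpa using this
  have hu : ∀ x y : F, spectralNorm ℚ_[2] F (x + y) ≤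
      max (spectralNorm ℚ_[2] F x) (spectralNorm ℚ_[2] F y) :=
    fun x y => isNonarchimedean_spectralNorm x y
  exact @aux_local F (spectralNorm.normedField ℚ_[2] F) (spectralNorm.completeSpace ℚ_[2] F)
    hu h2 m (aux_residue F m hm)

theorem stmt18 (F : Type*) [Field F] [Algebra ℚ_[2] F] [FiniteDimensional ℚ_[2] F]
    (m : ℕ) (hm : Module.finrank ℚ_[2] F = m)
    (hμ4 : ∃ ζ : F, IsPrimitiveRoot ζ 4) :
    Nat.card {L : IntermediateField F (AlgebraicClosure F) //
        Module.finrank F L = 4 ∧ IsGalois F L ∧ ∀ σ τ : L ≃ₐ[F] L, σ * τ = τ * σ} =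
      (32 * 2 ^ (2 * m) - 12 * 2 ^ m + 1) / 3 := by
  classical
  obtain ⟨ζ, hζ⟩ := hμ4
  haveI : CharZero F := charZero_of_injective_algebraMap (algebraMap ℚ_[2] F).injective
  rw [aux_kummer_bij F hζ]
  have hζ2 : ζ ^ 2 = -1 := by
    have h4 : ζ ^ 4 = 1 := hζ.pow_eq_one
    have h2 : ζ ^ 2 ≠ 1 := hζ.pow_ne_one_of_pos_of_lt (by norm_num) (by norm_num)
    have h : (ζ ^ 2 - 1) * (ζ ^ 2 + 1) = 0 := by linear_combination h4
    rcases mul_eq_zero.1 h with h | h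
    · exact absurd (sub_eq_zero.1 h) h2
    · exact eq_neg_of_add_eq_zero_left h
  have hζ0 : ζ ≠ 0 := hζ.ne_zero (by norm_num)
  obtain ⟨hc, hk⟩ := aux_quot (B := Fˣ) (2 ^ (m + 2)) (by positivity) (aux_index F m hm)
    (Units.mk0 ζ hζ0) (by
      intro x hx
      have h' : (x : F) ^ 2 = 1 := by
        have := congrArg Units.val hx
        simpa using this
      rcases (mul_self_eq_one_iff (a := (x : F))).1 ((sq _).symm.trans h') with h | h
      · left; exact Units.ext h
      · right
        apply Units.ext
        rw [h, Units.val_pow_eq_pow_val, Units.val_mk0, hζ2])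
  set G := Fˣ ⧸ (powMonoidHom 4 : Fˣ →* Fˣ).range with hG
  haveI : Finite G := Nat.finite_of_card_ne_zero (by rw [hc]; positivity)
  letI : Fintype G := Fintype.ofFinite G
  have h2 : (Finset.univ.filter (fun x : G => x ^ 2 = 1)).card = 2 ^ (m + 2) := by
    rw [← hk, ← Fintype.card_subtype, ← Nat.card_eq_fintype_card]
    rfl
  have h4 : ∀ x : G, x ^ 4 = 1 := by
    intro x
    obtain ⟨y, rfl⟩ := QuotientGroup.mk_surjective x
    exact (QuotientGroup.eq_one_iff _).2 ⟨y, rfl⟩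
  have key := aux_count_sub (2 ^ (m + 2)) hc (by convert h2) h4
  generalize Nat.card {H : Subgroup G // Nat.card H = 4} = N at key ⊢
  have e1 : 2 ^ (2 * m) = (2 ^ m) ^ 2 := by rw [mul_comm, pow_mul]
  have e2 : 2 ^ (m + 2) = 4 * 2 ^ m := by ring
  have ht : 1 ≤ 2 ^ m := Nat.one_le_two_pow
  rw [e2] at key
  rw [e1]
  generalize 2 ^ m = t at key ht ⊢
  obtain ⟨s, rfl⟩ : ∃ s, t = s + 1 := ⟨t - 1, by omega⟩
  have a1 : 4 * (s + 1) - 1 = 4 * s + 3 := by omega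
  have a2 : (4 * (s + 1)) ^ 2 = 16 * (s * s) + 32 * s + 16 := by ring
  have a3 : (4 * s + 3) * (4 * s + 3) = 16 * (s * s) + 24 * s + 9 := by ring
  have a4 : (s + 1) ^ 2 = s * s + 2 * s + 1 := by ring
  rw [a1, a2, a3] at key
  rw [a4]
  generalize s * s = r at key ⊢
  omega
end
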